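/- arXiv:1711.01064 — 3 statements merged into one kernel-verified Lean document; each statement's English description precedes it below -/
import Mathlib

section
/- For M ≥ 1 and 0 ≤ N ≤ M, the following Cauchy-type identity holds: Σ_{x ⊔ x̄ = {1,2,…,M}} F̄_{M,M−N}(z_1,…,z_{M−N}|w_1,…,w_M|x̄_1,…,x̄_{M−N}) · F_{M,N}(z_{M−N+1},…,z_M|w_1,…,w_M|x_1,…,x_N) = (a²−a⁻²)^M ∏_{i=1}^M w_i^M ∏_{i=1}^M (b w_i⁻¹−b⁻¹)(a²z_i²−a⁻²z_i⁻²) × [∏_{i,j=1}^M (a²+a⁻²−z_i⁻²w_j−z_i²w_j⁻¹)(a²+a⁻²−z_i⁻²w_j⁻¹−z_i²w_j)] / [∏_{1≤i<j≤M}(−z_i⁻¹z_j+z_i z_j⁻¹)(z_i⁻¹z_j⁻¹−z_i z_j)(−w_j⁻¹+w_i⁻¹)(w_i w_j−1)] × det_{M×M}( 1 / [(a²+a⁻²−z_i⁻²w_j−z_i²w_j⁻¹)(a²+a⁻²−z_i⁻²w_j⁻¹−z_i²w_j)] ), where the sum is over all pairs of increasing sequences x = {x_1 < ⋯ < x_N}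 and x̄ = {x̄_1 < ⋯ < x̄_{M−N}} of integers in {1,…,M} whose disjoint union is {1,2,…,M}. -/
open Finset

def eps {N : ℕ} (τ : Fin N → Bool) (j : Fin N) : ℤ := if τ j then 1 else -1

noncomputable def pairFactor (a Z1 Z2 : ℂ) (t1 t2 : ℤ) : ℂ :=
  ((a ^ (2:ℤ) * Z1 ^ t1 * Z2 ^ t2 - a ^ (-2:ℤ) * Z1 ^ (-t1) * Z2 ^ (-t2)) *
   (a ^ (2:ℤ) * Z1 ^ (-t1) * Z2 ^ t2 - a ^ (-2:ℤ) * Z1 ^ t1 * Z2 ^ (-t2))) /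
  ((Z1 ^ t1 * Z2 ^ t2 - Z1 ^ (-t1) * Z2 ^ (-t2)) *
   (Z1 ^ (-t1) * Z2 ^ t2 - Z1 ^ t1 * Z2 ^ (-t2)))

/-- The symmetric function `F_{M,N}(z_1,…,z_N|w_1,…,w_M|x_1,…,x_N)`,
where `x k` for `k = 0,…,N-1` encodes `x_{k+1}`. -/
noncomputable def FF (a b : ℂ) (M N : ℕ) (z : Fin N → ℂ) (w : Fin M → ℂ) (x : ℕ → ℕ) : ℂ :=
  (a ^ (2:ℤ) - a ^ (-2:ℤ)) ^ N *
  (∏ j, (-(a ^ (2:ℤ) * z j ^ (2:ℤ)) + a ^ (-2:ℤ) * z j ^ (-2:ℤ))) *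
  ∑ σ : Equiv.Perm (Fin N), ∑ τ : Fin N → Bool,
    (∏ j, (z j ^ (2 * eps τ j) - z j ^ (-(2 * eps τ j)))⁻¹) *
    (∏ p ∈ Finset.univ.filter (fun p : Fin N × Fin N => p.1 < p.2),
      pairFactor a (z (σ p.1)) (z (σ p.2)) (eps τ (σ p.1)) (eps τ (σ p.2))) *
    (∏ k, (b * a⁻¹ * z (σ k) ^ (-(eps τ (σ k))) - b⁻¹ * a * z (σ k) ^ (eps τ (σ k)))) *
    (∏ k, ∏ j : Fin M, (a * z (σ k) ^ (-(eps τ (σ k))) - a⁻¹ * z (σ k) ^ (eps τ (σ k)) * w j)) *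
    (∏ k : Fin N, ∏ j ∈ Finset.univ.filter (fun j : Fin M => (j : ℕ) + 1 < x k.val),
      (a * z (σ k) ^ (-(eps τ (σ k))) * w j - a⁻¹ * z (σ k) ^ (eps τ (σ k)))) *
    (∏ k : Fin N, ∏ j ∈ Finset.univ.filter (fun j : Fin M => x k.val ≤ (j : ℕ)),
      (a * z (σ k) ^ (eps τ (σ k)) - a⁻¹ * z (σ k) ^ (-(eps τ (σ k))) * w j))

/-- The dual symmetric function `F̄_{M,N}(z_1,…,z_N|w_1,…,w_M|x̄_1,…,x̄_N)`. -/
noncomputable def FBar (a b : ℂ) (M N : ℕ) (z : Fin N → ℂ) (w : Fin M → ℂ) (x : ℕ → ℕ) : ℂ :=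
  (a ^ (2:ℤ) - a ^ (-2:ℤ)) ^ N *
  (∏ j, (-(a ^ (2:ℤ) * z j ^ (2:ℤ)) + a ^ (-2:ℤ) * z j ^ (-2:ℤ))) *
  ∑ σ : Equiv.Perm (Fin N), ∑ τ : Fin N → Bool,
    (∏ j, (z j ^ (2 * eps τ j) - z j ^ (-(2 * eps τ j)))⁻¹) *
    (∏ p ∈ Finset.univ.filter (fun p : Fin N × Fin N => p.1 < p.2),
      pairFactor a (z (σ p.1)) (z (σ p.2)) (eps τ (σ p.1)) (eps τ (σ p.2))) *
    (∏ k, (b * a * z (σ k) ^ (eps τ (σ k)) - b⁻¹ * a⁻¹ * z (σ k) ^ (-(eps τ (σ k))))) *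
    (∏ k, ∏ j : Fin M, (a * z (σ k) ^ (-(eps τ (σ k))) * w j - a⁻¹ * z (σ k) ^ (eps τ (σ k)))) *
    (∏ k : Fin N, ∏ j ∈ Finset.univ.filter (fun j : Fin M => (j : ℕ) + 1 < x k.val),
      (a * z (σ k) ^ (-(eps τ (σ k))) - a⁻¹ * z (σ k) ^ (eps τ (σ k)) * w j)) *
    (∏ k : Fin N, ∏ j ∈ Finset.univ.filter (fun j : Fin M => x k.val ≤ (j : ℕ)),
      (a * z (σ k) ^ (eps τ (σ k)) * w j - a⁻¹ * z (σ k) ^ (-(eps τ (σ k)))))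

/-- `xfun T k` is the `(k+1)`-st smallest element of `T`, in 1-based labelling. -/
def xfun {M : ℕ} (T : Finset (Fin M)) (k : ℕ) : ℕ :=
  ((T.sort (· ≤ ·)).map (fun j : Fin M => (j : ℕ) + 1)).getD k 0

/-!
`F` and `F̄` are instances of one symmetrised sum in which every particle carries a kind; particles
of different kinds do not interact. Summing `F̄ F` over all splittings of the sites therefore gives
a single sum over `S_M × {±1}^M`, with all sites occupied, for particles of mixed kinds.

Peeling off the particle at the last site expresses this sum through the sums for `M - 1` particles,
and expanding along the last column does the same for the determinant. By induction it remains to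
compare two polynomials of degree at most `4M - 3` in the last inhomogeneity. They agree at `4M - 2`
points: the `2M` points at which the vertex weights of a particle vanish, where a single term
survives on each side, and the `2M - 2` points `w_j^{±1}`, where both sides vanish. These points are
distinct for generic parameters, and both sides are continuous in `a` and `w`.
-/
open Polynomial Filter Topology

section PairProd

variable {ι M : Type*} [CommMonoid M] {n : ℕ}

/-- The product `∏_{p < q} f p q` over the increasing pairs of a finite ordered type. -/
def pairProd [Fintype ι] [LT ι] [DecidableLT ι] (f : ι → ι → M) : M :=
  ∏ p ∈ univ.filter (fun p : ι × ι => p.1 < p.2), f p.1 p.2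

lemma pairProd_eq_prod_prod_ite [Fintype ι] [LT ι] [DecidableLT ι] (f : ι → ι → M) :
    pairProd f = ∏ q, ∏ p, if p < q then f p q else 1 := by
  rw [pairProd, prod_filter, Fintype.prod_prod_type, Finset.prod_comm]

lemma pairProd_mul [Fintype ι] [LT ι] [DecidableLT ι] (f h : ι → ι → M) :
    pairProd (fun p q => f p q * h p q) = pairProd f * pairProd h :=
  prod_mul_distrib

lemma pairProd_ne_zero {K : Type*} [CommMonoidWithZero K] [NoZeroDivisors K] [Nontrivial K]
    [Fintype ι] [Preorder ι] [DecidableLT ι] {f : ι → ι → K} (h : ∀ p q, p ≠ q → f p q ≠ 0) :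
    pairProd f ≠ 0 :=
  prod_ne_zero_iff.2 fun p hp => h p.1 p.2 (mem_filter.1 hp).2.ne

lemma pairProd_castSucc (f : Fin (n + 1) → Fin (n + 1) → M) :
    pairProd f = pairProd (fun p q : Fin n => f p.castSucc q.castSucc) *
      ∏ j : Fin n, f j.castSucc (Fin.last n) := by
  simp only [pairProd_eq_prod_prod_ite, Fin.prod_univ_castSucc, Fin.castSucc_lt_castSucc_iff,
    Fin.castSucc_lt_last, not_lt_of_gt (Fin.castSucc_lt_last _), lt_irrefl, if_true, if_false,
    mul_one]

lemma pairProd_succAbove (f : Fin (n + 1) → Fin (n + 1) → M) (i : Fin (n + 1)) :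
    pairProd f = (∏ k : Fin n,
        if i ≤ k.castSucc then f i (i.succAbove k) else f (i.succAbove k) i) *
      pairProd (fun p q => f (i.succAbove p) (i.succAbove q)) := by
  simp only [pairProd_eq_prod_prod_ite, Fin.prod_univ_succAbove _ i,
    Fin.succAbove_lt_succAbove_iff, lt_irrefl, if_false, one_mul, prod_mul_distrib]
  rw [← mul_assoc, ← prod_mul_distrib]
  congr 1
  refine prod_congr rfl fun k _ => ?_
  by_cases h : i ≤ k.castSucc
  · have hi : i < i.succAbove k := Fin.lt_succAbove_iff_le_castSucc _ _ |>.2 h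
    rw [if_neg hi.not_gt, if_pos hi, if_pos h, one_mul]
  · have hi : i.succAbove k < i := Fin.succAbove_lt_iff_castSucc_lt _ _ |>.2 (not_le.1 h)
    rw [if_pos hi, if_neg hi.not_gt, if_neg h, mul_one]

lemma pairProd_apply_mul_apply (w : Fin n → M) :
    pairProd (fun p q => w p * w q) = ∏ i, w i ^ (n - 1) := by
  induction n with
  | zero => simp [pairProd]
  | succ n ih =>
    have hpow (i : Fin n) : w i.castSucc ^ (n - 1) * w i.castSucc = w i.castSucc ^ n := by
      rw [← pow_succ, Nat.sub_add_cancel i.pos]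
    rw [pairProd_castSucc, ih, Fin.prod_univ_castSucc (fun i => w i ^ (n + 1 - 1)),
      prod_mul_distrib, ← mul_assoc, ← prod_mul_distrib]
    simp [hpow]

lemma prod_ite_le_castSucc_neg_one {R : Type*} [CommRing R] (i : Fin (n + 1)) :
    ∏ k : Fin n, (if i ≤ k.castSucc then (-1 : R) else 1) = (-1) ^ ((i : ℕ) + n) := by
  have hfilter : (range n).filter ((i : ℕ) ≤ ·) = Ico (i : ℕ) n := by
    ext k; simp [and_comm]
  have hparity : (i : ℕ) + n = (n - i) + 2 * i := by omega
  simp only [Fin.le_def, Fin.val_castSucc]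
  rw [Fin.prod_univ_eq_prod_range (fun k => if (i : ℕ) ≤ k then (-1 : R) else 1) n,
    prod_ite, hfilter, hparity, pow_add, pow_mul]
  simp

lemma pairProd_sub_succAbove {R : Type*} [CommRing R] (x : Fin (n + 1) → R) (i : Fin (n + 1)) :
    pairProd (fun p q => x q - x p) = (-1) ^ ((i : ℕ) + n) *
      (∏ k, (x i - x (i.succAbove k))) *
      pairProd (fun p q => x (i.succAbove q) - x (i.succAbove p)) := by
  rw [pairProd_succAbove _ i, ← prod_ite_le_castSucc_neg_one, ← prod_mul_distrib]
  congr 1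
  refine prod_congr rfl fun k _ => ?_
  split_ifs <;> ring

end PairProd

section InsertPerm

variable {n : ℕ}

/-- The permutation of `Fin (n + 1)` sending the last point to `i` and acting on the others as
`π`, followed by the increasing enumeration of the complement of `i`. -/
def insertPerm (i : Fin (n + 1)) (π : Equiv.Perm (Fin n)) : Equiv.Perm (Fin (n + 1)) :=
  ((finSuccEquiv' (Fin.last n)).trans (Equiv.optionCongr π)).trans (finSuccEquiv' i).symm

lemma insertPerm_last (i : Fin (n + 1)) (π : Equiv.Perm (Fin n)) :
    insertPerm i π (Fin.last n) = i := by
  simp [insertPerm]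

lemma insertPerm_castSucc (i : Fin (n + 1)) (π : Equiv.Perm (Fin n)) (p : Fin n) :
    insertPerm i π p.castSucc = i.succAbove (π p) := by
  rw [← Fin.succAbove_last_apply]
  simp only [insertPerm, Equiv.trans_apply, finSuccEquiv'_succAbove, Equiv.optionCongr_apply,
    Option.map_some, finSuccEquiv'_symm_some]

lemma insertPerm_bijective :
    Function.Bijective (fun x : Fin (n + 1) × Equiv.Perm (Fin n) => insertPerm x.1 x.2) := by
  rw [Fintype.bijective_iff_injective_and_card]
  refine ⟨?_, by simp [Fintype.card_perm, Nat.factorial_succ]⟩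
  rintro ⟨i, π⟩ ⟨j, ρ⟩ h
  obtain rfl : i = j := by
    simpa [insertPerm_last] using DFunLike.congr_fun h (Fin.last n)
  congr 1
  ext p : 1
  simpa [insertPerm_castSucc] using DFunLike.congr_fun h p.castSucc

end InsertPerm

section PolynomialFunctions

variable {R : Type*} [CommRing R] {d e : ℕ} {f h : R → R}

/-- `f` is the evaluation function of a polynomial of degree at most `d`. -/
def IsPolyFun (d : ℕ) (f : R → R) : Prop := ∃ p : R[X], p.natDegree ≤ d ∧ ∀ y, f y = p.eval y

namespace IsPolyFun

lemma const (c : R) : IsPolyFun 0 (fun _ => c) := ⟨C c, by simp, by simp⟩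

lemma add_mul (c m : R) : IsPolyFun 1 (fun y => c + m * y) :=
  ⟨C c + C m * X, by compute_degree, by simp⟩

lemma mono (hf : IsPolyFun d f) (hde : d ≤ e) : IsPolyFun e f :=
  let ⟨p, hp, hpf⟩ := hf
  ⟨p, hp.trans hde, hpf⟩

lemma mul (hf : IsPolyFun d f) (hh : IsPolyFun e h) : IsPolyFun (d + e) (fun y => f y * h y) := by
  obtain ⟨p, hp, hpf⟩ := hf
  obtain ⟨q, hq, hqh⟩ := hh
  exact ⟨p * q, natDegree_mul_le_of_le hp hq, fun y => by simp [hpf, hqh]⟩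

lemma sub (hf : IsPolyFun d f) (hh : IsPolyFun d h) : IsPolyFun d (fun y => f y - h y) := by
  obtain ⟨p, hp, hpf⟩ := hf
  obtain ⟨q, hq, hqh⟩ := hh
  exact ⟨p - q, natDegree_sub_le_of_le hp hq |>.trans (max_self d).le,
    fun y => by simp [hpf, hqh]⟩

variable {ι : Type*} {F : ι → R → R}

lemma sum (s : Finset ι) (hF : ∀ i, IsPolyFun d (F i)) : IsPolyFun d (fun y => ∑ i ∈ s, F i y) := by
  choose p hp hpF using hF
  exact ⟨∑ i ∈ s, p i, natDegree_sum_le_of_forall_le s _ fun i _ => hp i,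
    fun y => by simp [eval_finsetSum, hpF]⟩

lemma prod (s : Finset ι) (hF : ∀ i, IsPolyFun d (F i)) :
    IsPolyFun (#s * d) (fun y => ∏ i ∈ s, F i y) := by
  choose p hp hpF using hF
  refine ⟨∏ i ∈ s, p i, (natDegree_prod_le s _).trans ?_, fun y => by simp [eval_prod, hpF]⟩
  simpa using sum_le_card_nsmul s _ d fun i _ => hp i

lemma eq_zero_of_injective [IsDomain R] [Fintype ι] (hf : IsPolyFun d f) {node : ι → R}
    (hnode : Function.Injective node) (hzero : ∀ i, f (node i) = 0) (hcard : d < Fintype.card ι)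
    (y : R) : f y = 0 := by
  obtain ⟨p, hp, hpf⟩ := hf
  rw [hpf, eq_zero_of_natDegree_lt_card_of_eval_eq_zero p hnode
    (fun i => (hpf _).symm.trans (hzero i)) (hp.trans_lt hcard), eval_zero]

end IsPolyFun

end PolynomialFunctions

section Weights

variable {K : Type*} [Field K]

/-- `z ^ {±1}`, the sign being `+` for `true`. -/
def signPow (z : K) (t : Bool) : K := if t then z else z⁻¹

/-- `z² + z⁻²`: the denominators of the exchange factors are differences of this quantity. -/
def sqAddInvSq (z : K) : K := z ^ 2 + z⁻¹ ^ 2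

/-- The weight of a vertex with spectral parameter `u` and inhomogeneity `w`. The particles of `F`
have kind `g = true`, those of `F̄` have kind `g = false`. -/
def vertexWeight (a : K) (g : Bool) (u w : K) : K :=
  if g then a * u⁻¹ - a⁻¹ * u * w else a * u⁻¹ * w - a⁻¹ * u

/-- The weight of the reflecting end for a particle of kind `g`. -/
def boundaryWeight (a b : K) (g : Bool) (u : K) : K :=
  if g then b * a⁻¹ * u⁻¹ - b⁻¹ * a * u else b * a * u - b⁻¹ * a⁻¹ * u⁻¹

/-- The two-particle factor in the summands of `F` and `F̄`. -/
def exchangeFactor (a u v : K) : K :=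
  ((a ^ 2 * u * v - a⁻¹ ^ 2 * u⁻¹ * v⁻¹) * (a ^ 2 * u⁻¹ * v - a⁻¹ ^ 2 * u * v⁻¹)) /
  ((u * v - u⁻¹ * v⁻¹) * (u⁻¹ * v - u * v⁻¹))

/-- The exchange factor of two particles; particles of different kinds do not interact. -/
def kindExchange (a : K) (g h : Bool) (u v : K) : K := if g = h then exchangeFactor a u v else 1

/-- The one-particle factor in the summands of `F` and `F̄`, for a particle at site `p`. -/
def siteWeight (a b : K) (g : Bool) {M : ℕ} (u : K) (w : Fin M → K) (p : Fin M) : K :=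
  (u ^ 2 - u⁻¹ ^ 2)⁻¹ * boundaryWeight a b g u * (∏ j, vertexWeight a g u (w j)) *
    ∏ j, (if j < p then vertexWeight a (!g) u (w j)
      else if p < j then vertexWeight a g u⁻¹ (w j) else 1)

/-- The summand of index `σ` for particles at the sites `x`. -/
def permWeight (a b : K) {M N : ℕ} (g : Fin N → Bool) (x : Fin N → Fin M) (u : Fin N → K)
    (w : Fin M → K) (σ : Equiv.Perm (Fin N)) : K :=
  (∏ k, siteWeight a b (g (σ k)) (u (σ k)) w (x k)) *
    pairProd fun p q => kindExchange a (g (σ p)) (g (σ q)) (u (σ p)) (u (σ q))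

/-- The symmetrised sum for particles of kinds `g` at the sites `x`. When `g` is constantly `true`
(`false`) it is `F` (`F̄`) up to a prefactor. -/
def wavefunction (a b : K) {M N : ℕ} (g : Fin N → Bool) (x : Fin N → Fin M) (z : Fin N → K)
    (w : Fin M → K) : K :=
  ∑ σ : Equiv.Perm (Fin N), ∑ τ : Fin N → Bool,
    permWeight a b g x (fun i => signPow (z i) (τ i)) w σ

/-- The product of the four vertex weights attached to a row `z` and a column `w`; it is `w²` times
the denominator of the corresponding entry in the determinant. -/
def kernelDenom (a z w : K) : K :=
  vertexWeight a true z w * vertexWeight a true z⁻¹ w *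
    (vertexWeight a false z w * vertexWeight a false z⁻¹ w)

/-- The polynomial in `y` with roots `w` and `w⁻¹`. -/
def reflDiff (w y : K) : K := (y - w) * (w * y - 1)

lemma signPow_ne_zero {z : K} (hz : z ≠ 0) (t : Bool) : signPow z t ≠ 0 := by
  cases t <;> simp [signPow, hz]

lemma signPow_not (z : K) (t : Bool) : signPow z (!t) = (signPow z t)⁻¹ := by
  cases t <;> simp [signPow]

lemma apply_signPow {α : Type*} {f : K → α} {z : K} (hf : f z⁻¹ = f z) (t : Bool) :
    f (signPow z t) = f z := by
  cases t <;> simp [signPow, hf]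

lemma sqAddInvSq_signPow (z : K) (t : Bool) : sqAddInvSq (signPow z t) = sqAddInvSq z :=
  apply_signPow (by simp only [sqAddInvSq, inv_inv, add_comm]) t

lemma kernelDenom_signPow_left (a z w : K) (t : Bool) :
    kernelDenom a (signPow z t) w = kernelDenom a z w :=
  apply_signPow (f := fun z => kernelDenom a z w) (by simp only [kernelDenom, inv_inv]; ring) t

lemma kernelDenom_inv_right {a z w : K} (ha : a ≠ 0) (hz : z ≠ 0) (hw : w ≠ 0) :
    kernelDenom a z w⁻¹ = w⁻¹ ^ 4 * kernelDenom a z w := by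
  simp only [kernelDenom, vertexWeight, Bool.false_eq_true, if_true, if_false, inv_inv]
  field_simp

lemma reflDiff_signPow {w : K} (hw : w ≠ 0) (t : Bool) : reflDiff w (signPow w t) = 0 := by
  cases t <;> simp [reflDiff, signPow, hw]

lemma kindExchange_inv (a : K) (g h : Bool) (u v : K) :
    kindExchange a g h u⁻¹ v = kindExchange a g h u v := by
  simp only [kindExchange, exchangeFactor, inv_inv]
  congr 2 <;> ring

lemma mul_sub_mul_sub_eq_sqAddInvSq_sub {u v : K} (hu : u ≠ 0) (hv : v ≠ 0) :
    (v * u - v⁻¹ * u⁻¹) * (v⁻¹ * u - v * u⁻¹) = sqAddInvSq u - sqAddInvSq v := by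
  simp only [sqAddInvSq]; field_simp; ring

lemma isPolyFun_vertexWeight (a : K) (g : Bool) (u : K) : IsPolyFun 1 (vertexWeight a g u) := by
  cases g
  · convert IsPolyFun.add_mul (-(a⁻¹ * u)) (a * u⁻¹) using 2; simp [vertexWeight]; ring
  · convert IsPolyFun.add_mul (a * u⁻¹) (-(a⁻¹ * u)) using 2; simp [vertexWeight]; ring

lemma isPolyFun_reflDiff (w : K) : IsPolyFun 2 (reflDiff w) := by
  convert (IsPolyFun.add_mul (-w) 1).mul (IsPolyFun.add_mul (-1) w) using 2
  simp only [reflDiff]; ring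

lemma isPolyFun_kernelDenom (a z : K) : IsPolyFun 4 (kernelDenom a z) :=
  ((isPolyFun_vertexWeight a true z).mul (isPolyFun_vertexWeight a true z⁻¹)).mul
    ((isPolyFun_vertexWeight a false z).mul (isPolyFun_vertexWeight a false z⁻¹))

end Weights

section Peeling

variable {K : Type*} [Field K] {n : ℕ}

/-- The factor contributed by a particle `(gk, uk)` when the particle `(gi, ui)` sits at the last
site, of inhomogeneity `y`. -/
def passFactor (a : K) (gi gk : Bool) (ui uk y : K) : K :=
  vertexWeight a gk uk y * vertexWeight a gk uk⁻¹ y * kindExchange a gk gi uk ui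

lemma passFactor_signPow (a : K) (gi gk : Bool) (ui uk y : K) (t : Bool) :
    passFactor a gi gk ui (signPow uk t) y = passFactor a gi gk ui uk y :=
  apply_signPow (f := fun uk => passFactor a gi gk ui uk y)
    (by simp only [passFactor, kindExchange_inv, inv_inv, mul_comm (vertexWeight a gk uk⁻¹ y)]) t

lemma isPolyFun_passFactor (a : K) (gi gk : Bool) (ui uk : K) :
    IsPolyFun 2 (passFactor a gi gk ui uk) :=
  ((isPolyFun_vertexWeight a gk uk).mul (isPolyFun_vertexWeight a gk uk⁻¹)).mul (.const _)

lemma siteWeight_snoc_castSucc (a b : K) (g : Bool) (u : K) (w : Fin n → K) (y : K) (p : Fin n) :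
    siteWeight a b g u (Fin.snoc w y) p.castSucc =
      siteWeight a b g u w p * (vertexWeight a g u y * vertexWeight a g u⁻¹ y) := by
  simp only [siteWeight, Fin.prod_univ_castSucc, Fin.snoc_castSucc, Fin.snoc_last,
    Fin.castSucc_lt_castSucc_iff, Fin.castSucc_lt_last, not_lt_of_gt (Fin.castSucc_lt_last p),
    if_true, if_false]
  ring

lemma siteWeight_snoc_last (a b : K) (g : Bool) (u : K) (w : Fin n → K) (y : K) :
    siteWeight a b g u (Fin.snoc w y) (Fin.last n) =
      (u ^ 2 - u⁻¹ ^ 2)⁻¹ * boundaryWeight a b g u * vertexWeight a g u y *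
        ∏ j, vertexWeight a g u (w j) * vertexWeight a (!g) u (w j) := by
  simp only [siteWeight, Fin.prod_univ_castSucc, Fin.snoc_castSucc, Fin.snoc_last,
    Fin.castSucc_lt_last, lt_irrefl, if_true, if_false, prod_mul_distrib]
  ring

lemma permWeight_id_insertPerm (a b : K) (g : Fin (n + 1) → Bool) (u : Fin (n + 1) → K)
    (w : Fin n → K) (y : K) (i : Fin (n + 1)) (π : Equiv.Perm (Fin n)) :
    permWeight a b g id u (Fin.snoc w y) (insertPerm i π) =
      siteWeight a b (g i) (u i) (Fin.snoc w y) (Fin.last n) *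
        (∏ k, passFactor a (g i) (i.removeNth g k) (u i) (i.removeNth u k) y) *
        permWeight a b (i.removeNth g) id (i.removeNth u) w π := by
  rw [← Equiv.prod_comp π]
  simp only [permWeight, pairProd_castSucc, Fin.prod_univ_castSucc, insertPerm_last,
    insertPerm_castSucc, id, siteWeight_snoc_castSucc, passFactor, prod_mul_distrib,
    Fin.removeNth_apply]
  ring

/-- The coefficient with which the particle `i` at the last site, of inhomogeneity `y`, enters the
wavefunction. -/
def peelCoeff (a b : K) (g : Fin (n + 1) → Bool) (z : Fin (n + 1) → K) (w : Fin n → K) (y : K)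
    (i : Fin (n + 1)) : K :=
  ∑ t : Bool, siteWeight a b (g i) (signPow (z i) t) (Fin.snoc w y) (Fin.last n) *
    ∏ k, passFactor a (g i) (i.removeNth g k) (signPow (z i) t) (i.removeNth z k) y

lemma isPolyFun_peelCoeff (a b : K) (g : Fin (n + 1) → Bool) (z : Fin (n + 1) → K)
    (w : Fin n → K) (i : Fin (n + 1)) :
    IsPolyFun (1 + n * 2) (fun y => peelCoeff a b g z w y i) := by
  refine IsPolyFun.sum _ fun t => ?_
  simp only [siteWeight_snoc_last]
  refine ((((IsPolyFun.const _).mul (isPolyFun_vertexWeight _ _ _)).mul (.const _)).mul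
    (.prod univ fun k => isPolyFun_passFactor _ _ _ _ _)).mono ?_
  simp

lemma wavefunction_id_snoc (a b : K) (g : Fin (n + 1) → Bool) (z : Fin (n + 1) → K)
    (w : Fin n → K) (y : K) :
    wavefunction a b g id z (Fin.snoc w y) = ∑ i, peelCoeff a b g z w y i *
      wavefunction a b (i.removeNth g) id (i.removeNth z) w := by
  simp only [wavefunction]
  rw [← insertPerm_bijective.sum_comp, Fintype.sum_prod_type]
  refine sum_congr rfl fun i _ => ?_
  rw [mul_sum]
  refine sum_congr rfl fun π _ => ?_
  rw [← (Fin.insertNthEquiv (fun _ => Bool) i).sum_comp, Fintype.sum_prod_type, peelCoeff,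
    sum_mul_sum]
  refine sum_congr rfl fun t _ => sum_congr rfl fun τ _ => ?_
  have hrem : i.removeNth (fun k => signPow (z k) (i.insertNth (α := fun _ => Bool) t τ k)) =
      fun k => signPow (i.removeNth z k) (τ k) := by
    ext k; simp [Fin.removeNth_apply]
  simp only [permWeight_id_insertPerm, Fin.insertNthEquiv_apply, Fin.insertNth_apply_same,
    hrem, passFactor_signPow]

end Peeling

section DeterminantForm

variable {K : Type*} [Field K] {m n : ℕ}

/-- The matrix in the determinant formula. -/
def kernelMatrix (a : K) (z : Fin m → K) (w : Fin n → K) : Matrix (Fin m) (Fin n) K :=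
  Matrix.of fun i j => (kernelDenom a (z i) (w j))⁻¹

/-- The prefactor of the determinant in the determinant formula. -/
def detPrefactor (a b : K) (z : Fin m → K) (w : Fin n → K) : K :=
  (∏ j, (w j / b - b)) * (∏ i, ∏ j, kernelDenom a (z i) (w j)) /
    (pairProd (fun p q => sqAddInvSq (z q) - sqAddInvSq (z p)) *
      pairProd (fun p q => reflDiff (w p) (w q)))

/-- The determinant formula for the wavefunction of `n` particles on `n` sites. -/
def determinantForm (a b : K) (z w : Fin n → K) : K :=
  detPrefactor a b z w * (kernelMatrix a z w).det

/-- The coefficients in the expansion of `determinantForm` along the column of the last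
inhomogeneity `y`. -/
def detCoeff (a : K) (z : Fin (n + 1) → K) (w : Fin n → K) (y : K) (i : Fin (n + 1)) : K :=
  (∏ k, kernelDenom a (i.removeNth z k) y) *
    (∏ k, (sqAddInvSq (z i) - sqAddInvSq (i.removeNth z k))⁻¹) * ∏ j, kernelDenom a (z i) (w j)

lemma isPolyFun_detCoeff (a : K) (z : Fin (n + 1) → K) (w : Fin n → K) (i : Fin (n + 1)) :
    IsPolyFun (n * 4) (fun y => detCoeff a z w y i) :=
  (((IsPolyFun.prod univ fun _ => isPolyFun_kernelDenom a _).mul (.const _)).mul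
    (.const _)).mono (by simp)

lemma detCoeff_mul_detPrefactor (a b : K) (z : Fin (n + 1) → K) (w : Fin n → K) (y : K)
    (i : Fin (n + 1)) :
    detCoeff a z w y i * detPrefactor a b (i.removeNth z) w =
      detPrefactor a b z w * ((-1) ^ ((i : ℕ) + n) * ∏ k, kernelDenom a (i.removeNth z k) y) := by
  have hsign : (-1 : K) ^ ((i : ℕ) + n) ≠ 0 := pow_ne_zero _ (neg_ne_zero.2 one_ne_zero)
  simp only [detPrefactor, detCoeff, Fin.removeNth_apply, prod_inv_distrib, div_eq_mul_inv,
    mul_inv, pairProd_sub_succAbove (fun i => sqAddInvSq (z i)) i,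
    Fin.prod_univ_succAbove (fun i => ∏ j, kernelDenom a (z i) (w j)) i]
  field_simp

lemma det_kernelMatrix_snoc (a : K) (z : Fin (n + 1) → K) (w : Fin n → K) (y : K) :
    (kernelMatrix a z (Fin.snoc w y)).det = ∑ i : Fin (n + 1), (-1) ^ ((i : ℕ) + n) *
      (kernelDenom a (z i) y)⁻¹ * (kernelMatrix a (i.removeNth z) w).det := by
  have hminor (i : Fin (n + 1)) : (kernelMatrix a z (Fin.snoc w y)).submatrix i.succAbove
      (Fin.last n).succAbove = kernelMatrix a (i.removeNth z) w := by
    ext k j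
    simp [kernelMatrix, Fin.succAbove_last, Fin.removeNth_apply]
  rw [Matrix.det_succ_column _ (Fin.last n)]
  simp only [hminor]
  simp [kernelMatrix]

lemma sum_detCoeff_mul_determinantForm (a b : K) (z : Fin (n + 1) → K) (w : Fin n → K) {y : K}
    (hy : ∀ i, kernelDenom a (z i) y ≠ 0) :
    ∑ i, detCoeff a z w y i * determinantForm a b (i.removeNth z) w =
      detPrefactor a b z w * (∏ i, kernelDenom a (z i) y) *
        (kernelMatrix a z (Fin.snoc w y)).det := by
  rw [det_kernelMatrix_snoc, mul_sum]
  refine sum_congr rfl fun i _ => ?_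
  rw [determinantForm, ← mul_assoc, detCoeff_mul_detPrefactor,
    Fin.prod_univ_succAbove (fun i => kernelDenom a (z i) y) i]
  simp only [Fin.removeNth_apply]
  field_simp [hy i]

lemma determinantForm_snoc (a b : K) (z : Fin (n + 1) → K) (w : Fin n → K) {y : K}
    (hy : ∀ i, kernelDenom a (z i) y ≠ 0) (hw : ∀ j, reflDiff (w j) y ≠ 0) :
    (∏ j, reflDiff (w j) y) * determinantForm a b z (Fin.snoc w y) =
      (y / b - b) * ∑ i, detCoeff a z w y i * determinantForm a b (i.removeNth z) w := by
  have hprod : ∏ j, reflDiff (w j) y ≠ 0 := prod_ne_zero_iff.2 fun j _ => hw j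
  rw [sum_detCoeff_mul_determinantForm a b z w hy]
  simp only [determinantForm, detPrefactor, pairProd_castSucc (fun _ _ => reflDiff _ _),
    Fin.prod_univ_castSucc (fun j => (Fin.snoc w y : Fin (n + 1) → K) j / b - b),
    Fin.prod_univ_castSucc (fun j => kernelDenom a _ ((Fin.snoc w y : Fin (n + 1) → K) j)),
    prod_mul_distrib, Fin.snoc_castSucc, Fin.snoc_last]
  field_simp

lemma det_eq_zero_of_col_eq_mul {R ι : Type*} [CommRing R] [Fintype ι] [DecidableEq ι]
    {A : Matrix ι ι R} {i j : ι} (hij : i ≠ j) {c : R} (hcol : ∀ k, A k i = c * A k j) :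
    A.det = 0 := by
  have hA : A = A.updateCol i (c • fun k => A k j) := by
    ext k l
    obtain rfl | hl := eq_or_ne l i
    · simp [hcol]
    · simp [hl]
  rw [hA, Matrix.det_updateCol_smul, Matrix.det_updateCol_eq_zero hij.symm, mul_zero]

lemma det_kernelMatrix_snoc_signPow {a : K} (ha : a ≠ 0) {z : Fin (n + 1) → K}
    (hz : ∀ i, z i ≠ 0) {w : Fin n → K} {j : Fin n} (hw : w j ≠ 0) (t : Bool) :
    (kernelMatrix a z (Fin.snoc w (signPow (w j) t))).det = 0 := by
  refine det_eq_zero_of_col_eq_mul (Fin.castSucc_lt_last j).ne' (c := if t then 1 else w j ^ 4)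
    fun k => ?_
  cases t
  · simp [kernelMatrix, signPow, kernelDenom_inv_right ha (hz k) hw, mul_comm]
  · simp [kernelMatrix, signPow]

end DeterminantForm

section Nodes

variable {K : Type*} [Field K] {a b u v : K} {n : ℕ}

/-- The zero of `vertexWeight a g u⁻¹`, at which the peeling expansion reduces to one term. -/
def node (a : K) (g : Bool) (u : K) : K := if g then a ^ 2 * u ^ 2 else a⁻¹ ^ 2 * u⁻¹ ^ 2

lemma vertexWeight_inv_node (ha : a ≠ 0) (hu : u ≠ 0) (g : Bool) :
    vertexWeight a g u⁻¹ (node a g u) = 0 := by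
  cases g <;> simp [vertexWeight, node] <;> field_simp <;> ring

lemma boundaryWeight_mul_vertexWeight_node (ha : a ≠ 0) (hb : b ≠ 0) (hu : u ≠ 0)
    (hu4 : u ^ 2 - u⁻¹ ^ 2 ≠ 0) (g : Bool) :
    (u ^ 2 - u⁻¹ ^ 2)⁻¹ * boundaryWeight a b g u * vertexWeight a g u (node a g u) =
      node a g u / b - b := by
  rw [mul_assoc, inv_mul_eq_iff_eq_mul₀ hu4]
  cases g <;> simp [vertexWeight, node, boundaryWeight] <;> field_simp <;> ring

lemma vertexWeight_mul_reflDiff_node (ha : a ≠ 0) (hu : u ≠ 0) (g : Bool) (w : K) :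
    vertexWeight a g u w * vertexWeight a (!g) u w * reflDiff w (node a g u) =
      node a g u * kernelDenom a u w := by
  cases g <;> simp [vertexWeight, node, kernelDenom, reflDiff] <;> field_simp
  ring

lemma kernelDenom_node_self (ha : a ≠ 0) (hu : u ≠ 0) (g : Bool) :
    kernelDenom a u (node a g u) = 0 := by
  have hzero := vertexWeight_inv_node ha hu g
  cases g <;> simp [kernelDenom, hzero]

lemma kernelDenom_node (ha : a ≠ 0) (hu : u ≠ 0) (hv : v ≠ 0)
    (huv : sqAddInvSq u ≠ sqAddInvSq v) (g h : Bool) :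
    kernelDenom a v (node a g u) =
      node a g u * passFactor a g h u v (node a g u) * (sqAddInvSq u - sqAddInvSq v) := by
  by_cases hgh : h = g
  · subst hgh
    rw [passFactor, kindExchange, if_pos rfl, exchangeFactor,
      mul_sub_mul_sub_eq_sqAddInvSq_sub hu hv, mul_assoc, mul_assoc (_ * _),
      div_mul_cancel₀ _ (sub_ne_zero.2 huv)]
    cases h <;> simp [vertexWeight, node, kernelDenom] <;> field_simp
  · obtain rfl : h = !g := Bool.eq_not_of_ne hgh
    simp only [passFactor, kindExchange, if_neg hgh, sqAddInvSq]
    cases g <;> simp [vertexWeight, node, kernelDenom] <;> field_simp <;> ring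

lemma peelCoeff_node_of_ne (ha : a ≠ 0) (b : K) (g : Fin (n + 1) → Bool) {z : Fin (n + 1) → K}
    (w : Fin n → K) {i k : Fin (n + 1)} (hki : k ≠ i) (hz : z i ≠ 0) (t : Bool) :
    peelCoeff a b g z w (node a (g i) (signPow (z i) t)) k = 0 := by
  obtain ⟨l, rfl⟩ := Fin.exists_succAbove_eq hki.symm
  refine sum_eq_zero fun s _ => mul_eq_zero_of_right _ (prod_eq_zero (mem_univ l) ?_)
  rw [Fin.removeNth_apply, Fin.removeNth_apply, ← passFactor_signPow (t := t), passFactor,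
    vertexWeight_inv_node ha (signPow_ne_zero hz t), mul_zero, zero_mul]

lemma detCoeff_node_of_ne (ha : a ≠ 0) (g : Bool) {z : Fin (n + 1) → K} (w : Fin n → K)
    {i k : Fin (n + 1)} (hki : k ≠ i) (hz : z i ≠ 0) (t : Bool) :
    detCoeff a z w (node a g (signPow (z i) t)) k = 0 := by
  obtain ⟨l, rfl⟩ := Fin.exists_succAbove_eq hki.symm
  refine mul_eq_zero_of_left (mul_eq_zero_of_left (prod_eq_zero (mem_univ l) ?_) _) _
  rw [Fin.removeNth_apply, ← kernelDenom_signPow_left a _ _ t,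
    kernelDenom_node_self ha (signPow_ne_zero hz t)]

lemma sq_sub_inv_sq_signPow_ne_zero (hu : u ^ 2 - u⁻¹ ^ 2 ≠ 0) (t : Bool) :
    signPow u t ^ 2 - (signPow u t)⁻¹ ^ 2 ≠ 0 := by
  cases t
  · simpa only [signPow, Bool.false_eq_true, if_false, inv_inv, ← neg_sub (u ^ 2),
      neg_ne_zero] using hu
  · simpa [signPow] using hu

lemma peelCoeff_node_self (ha : a ≠ 0) (hb : b ≠ 0) (g : Fin (n + 1) → Bool)
    {z : Fin (n + 1) → K} (w : Fin n → K) {i : Fin (n + 1)} (hz : z i ≠ 0)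
    (hz4 : z i ^ 2 - (z i)⁻¹ ^ 2 ≠ 0) (t : Bool) {u y : K} (hu : u = signPow (z i) t)
    (hy : y = node a (g i) u) :
    peelCoeff a b g z w y i = (y / b - b) *
      (∏ j, vertexWeight a (g i) u (w j) * vertexWeight a (!(g i)) u (w j)) *
        ∏ k, passFactor a (g i) (i.removeNth g k) u (i.removeNth z k) y := by
  subst hu hy
  have hu0 := signPow_ne_zero hz t
  rw [peelCoeff, Fintype.sum_eq_single t, siteWeight_snoc_last,
    boundaryWeight_mul_vertexWeight_node ha hb hu0 (sq_sub_inv_sq_signPow_ne_zero hz4 t)]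
  intro s hs
  rw [Bool.eq_not_of_ne hs, signPow_not, siteWeight_snoc_last, vertexWeight_inv_node ha hu0]
  simp

lemma prod_reflDiff_mul_peelCoeff_node_self (ha : a ≠ 0) (hb : b ≠ 0) (g : Fin (n + 1) → Bool)
    {z : Fin (n + 1) → K} (w : Fin n → K) {i : Fin (n + 1)} (hz : ∀ i, z i ≠ 0)
    (hz4 : z i ^ 2 - (z i)⁻¹ ^ 2 ≠ 0) (hinj : Function.Injective fun i => sqAddInvSq (z i))
    (t : Bool) {y : K} (hy : y = node a (g i) (signPow (z i) t)) :
    (∏ j, reflDiff (w j) y) * peelCoeff a b g z w y i = (y / b - b) * detCoeff a z w y i := by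
  set u := signPow (z i) t with hu
  have hu0 : u ≠ 0 := signPow_ne_zero (hz i) t
  have hw : (∏ j, reflDiff (w j) y) *
      (∏ j, vertexWeight a (g i) u (w j) * vertexWeight a (!(g i)) u (w j)) =
      y ^ n * ∏ j, kernelDenom a (z i) (w j) := by
    rw [← prod_mul_distrib, ← Fin.prod_const, ← prod_mul_distrib]
    refine prod_congr rfl fun j _ => ?_
    rw [mul_comm, hy, vertexWeight_mul_reflDiff_node ha hu0, hu, kernelDenom_signPow_left]
  have hpass : (∏ k, kernelDenom a (i.removeNth z k) y) *
      (∏ k, (sqAddInvSq (z i) - sqAddInvSq (i.removeNth z k))⁻¹) =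
      y ^ n * ∏ k, passFactor a (g i) (i.removeNth g k) u (i.removeNth z k) y := by
    rw [← prod_mul_distrib, ← Fin.prod_const, ← prod_mul_distrib]
    refine prod_congr rfl fun k _ => ?_
    have hne : sqAddInvSq u ≠ sqAddInvSq (i.removeNth z k) := by
      rw [hu, sqAddInvSq_signPow]
      exact hinj.ne (Fin.succAbove_ne i k).symm
    rw [hy, kernelDenom_node ha hu0 (v := i.removeNth z k) (hz _) hne (g i) (i.removeNth g k),
      ← sqAddInvSq_signPow (z i) t, ← hu, mul_inv_cancel_right₀ (sub_ne_zero.2 hne)]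
  rw [peelCoeff_node_self ha hb g w (hz i) hz4 t hu hy, detCoeff, hpass]
  linear_combination (y / b - b) *
    (∏ k, passFactor a (g i) (i.removeNth g k) u (i.removeNth z k) y) * hw

end Nodes

section Genericity

variable {K ι κ : Type*} [Field K] {a : K} {z : ι → K} {w : κ → K}

/-- The parameters avoid the zeros and poles of the determinant formula. -/
structure RegularParams (a : K) (z : ι → K) (w : κ → K) : Prop where
  a_ne_zero : a ≠ 0
  z_ne_zero : ∀ i, z i ≠ 0
  w_ne_zero : ∀ j, w j ≠ 0
  kernelDenom_ne_zero : ∀ i j, kernelDenom a (z i) (w j) ≠ 0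
  sq_sub_inv_sq_ne_zero : ∀ i, z i ^ 2 - (z i)⁻¹ ^ 2 ≠ 0
  sqAddInvSq_injective : Function.Injective fun i => sqAddInvSq (z i)
  reflDiff_ne_zero : Pairwise fun j k => reflDiff (w j) (w k) ≠ 0

/-- Regular parameters for which moreover the interpolation nodes are distinct, see
`GenericParams.interpolationNode_injective`. -/
structure GenericParams (a : K) (z : ι → K) (w : κ → K) : Prop extends RegularParams a z w where
  node_ne : ∀ i k s t, a ^ 4 * (signPow (z i) s ^ 2 * signPow (z k) t ^ 2) ≠ 1
  w_sq_ne_one : ∀ j, w j ^ 2 ≠ 1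

lemma GenericParams.comp {ι' κ' : Type*} (h : GenericParams a z w) {e : ι' → ι}
    (he : Function.Injective e) {f : κ' → κ} (hf : Function.Injective f) :
    GenericParams a (z ∘ e) (w ∘ f) where
  a_ne_zero := h.a_ne_zero
  z_ne_zero _ := h.z_ne_zero _
  w_ne_zero _ := h.w_ne_zero _
  kernelDenom_ne_zero _ _ := h.kernelDenom_ne_zero _ _
  sq_sub_inv_sq_ne_zero _ := h.sq_sub_inv_sq_ne_zero _
  sqAddInvSq_injective := h.sqAddInvSq_injective.comp he
  reflDiff_ne_zero _ _ hjk := h.reflDiff_ne_zero (hf.ne hjk)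
  node_ne _ _ := h.node_ne _ _
  w_sq_ne_one _ := h.w_sq_ne_one _

lemma RegularParams.kernelDenom_signPow_ne_zero (h : RegularParams a z w) (i : ι) (j : κ)
    (t : Bool) : kernelDenom a (z i) (signPow (w j) t) ≠ 0 := by
  cases t
  · simpa [signPow, kernelDenom_inv_right h.a_ne_zero (h.z_ne_zero i) (h.w_ne_zero j),
      h.w_ne_zero j] using h.kernelDenom_ne_zero i j
  · simpa [signPow] using h.kernelDenom_ne_zero i j

lemma RegularParams.signPow_sq_injective (h : RegularParams a z w) :
    Function.Injective fun x : ι × Bool => signPow (z x.1) x.2 ^ 2 := by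
  rintro ⟨i, s⟩ ⟨k, t⟩ hst
  obtain rfl : i = k := h.sqAddInvSq_injective <| by
    simp only at hst ⊢
    rw [← sqAddInvSq_signPow (z i) s, ← sqAddInvSq_signPow (z k) t, sqAddInvSq, sqAddInvSq,
      inv_pow, inv_pow, hst]
  by_contra hne
  have hts : t = !s := Bool.eq_not_of_ne fun hts => hne (by rw [hts])
  refine sq_sub_inv_sq_signPow_ne_zero (h.sq_sub_inv_sq_ne_zero i) s ?_
  simp only [hts, signPow_not] at hst
  exact sub_eq_zero.2 hst

lemma GenericParams.node_injective (h : GenericParams a z w) (g : ι → Bool) :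
    Function.Injective fun x : ι × Bool => node a (g x.1) (signPow (z x.1) x.2) := by
  rintro ⟨i, s⟩ ⟨k, t⟩ hst
  have ha := h.a_ne_zero
  have hs := signPow_ne_zero (h.z_ne_zero i) s
  have ht := signPow_ne_zero (h.z_ne_zero k) t
  simp only [node] at hst
  split_ifs at hst
  · exact h.signPow_sq_injective (mul_left_cancel₀ (pow_ne_zero 2 ha) hst)
  · refine absurd ?_ (h.node_ne i k s t)
    field_simp at hst
    linear_combination hst
  · refine absurd ?_ (h.node_ne i k s t)
    field_simp at hst
    linear_combination -hst
  · refine h.signPow_sq_injective ?_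
    simpa [ha] using hst

lemma GenericParams.signPow_injective (h : GenericParams a z w) :
    Function.Injective fun x : κ × Bool => signPow (w x.1) x.2 := by
  have hmul (j k : κ) : w j * w k ≠ 1 := by
    obtain rfl | hjk := eq_or_ne j k
    · simpa [sq] using h.w_sq_ne_one j
    · exact sub_ne_zero.1 (right_ne_zero_of_mul (h.reflDiff_ne_zero hjk))
  have hinj : Function.Injective w := fun j k hjk => by
    by_contra hne
    exact h.reflDiff_ne_zero hne (by simp [reflDiff, hjk])
  rintro ⟨j, s⟩ ⟨k, t⟩ hst
  cases s <;> cases t <;> simp only [signPow, Bool.false_eq_true, if_true, if_false] at hst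
  · rw [hinj (inv_injective hst)]
  · exact absurd (by rw [← hst, mul_inv_cancel₀ (h.w_ne_zero j)]) (hmul j k)
  · exact absurd (by rw [hst, inv_mul_cancel₀ (h.w_ne_zero k)]) (hmul j k)
  · rw [hinj hst]

/-- The points at which both sides of the peeling identity are compared. -/
def interpolationNode (a : K) (g : ι → Bool) (z : ι → K) (w : κ → K) :
    (ι × Bool) ⊕ (κ × Bool) → K :=
  Sum.elim (fun x => node a (g x.1) (signPow (z x.1) x.2)) (fun x => signPow (w x.1) x.2)

lemma GenericParams.interpolationNode_injective (h : GenericParams a z w)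
    (g : ι → Bool) : Function.Injective (interpolationNode a g z w) := by
  refine (h.node_injective g).sumElim h.signPow_injective fun ⟨i, s⟩ ⟨j, t⟩ hst => ?_
  refine h.kernelDenom_signPow_ne_zero i j t ?_
  rw [← hst, ← kernelDenom_signPow_left a _ _ s,
    kernelDenom_node_self h.a_ne_zero (signPow_ne_zero (h.z_ne_zero i) s)]

end Genericity

section GenericCase

variable {K : Type*} [Field K] {a b : K} {n : ℕ}

lemma isPolyFun_peeling_sub (a b : K) (g : Fin (n + 1) → Bool) (z : Fin (n + 1) → K)
    (w : Fin n → K) (R : Fin (n + 1) → K) :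
    IsPolyFun (4 * n + 1) fun y => (∏ j, reflDiff (w j) y) * (∑ i, peelCoeff a b g z w y i * R i) -
      (y / b - b) * ∑ i, detCoeff a z w y i * R i := by
  refine IsPolyFun.sub ?_ ?_
  · refine ((IsPolyFun.prod univ fun j => isPolyFun_reflDiff (w j)).mul
      (.sum univ fun i => (isPolyFun_peelCoeff a b g z w i).mul (.const (R i)))).mono ?_
    simp only [card_univ, Fintype.card_fin]
    omega
  · have hlin : IsPolyFun 1 fun y => y / b - b := by
      convert IsPolyFun.add_mul (-b) b⁻¹ using 2
      ring
    exact (hlin.mul (.sum univ fun i => (isPolyFun_detCoeff a z w i).mul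
      (.const (R i)))).mono (by omega)

lemma peeling_eq_at_node {z : Fin (n + 1) → K} {w : Fin n → K} (h : RegularParams a z w)
    (hb : b ≠ 0) (g : Fin (n + 1) → Bool) (R : Fin (n + 1) → K) (i : Fin (n + 1)) (t : Bool) {y : K}
    (hy : y = node a (g i) (signPow (z i) t)) :
    (∏ j, reflDiff (w j) y) * ∑ i, peelCoeff a b g z w y i * R i =
      (y / b - b) * ∑ i, detCoeff a z w y i * R i := by
  rw [Fintype.sum_eq_single i fun k hk => by
      rw [hy, peelCoeff_node_of_ne h.a_ne_zero b g w hk (h.z_ne_zero i), zero_mul],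
    Fintype.sum_eq_single i fun k hk => by
      rw [hy, detCoeff_node_of_ne h.a_ne_zero _ w hk (h.z_ne_zero i), zero_mul],
    ← mul_assoc, ← mul_assoc, prod_reflDiff_mul_peelCoeff_node_self h.a_ne_zero hb g w
      h.z_ne_zero (h.sq_sub_inv_sq_ne_zero i) h.sqAddInvSq_injective t hy]

/-- Both sides are polynomials of degree at most `4n + 1` in `y`, and they agree at the `4n + 2`
interpolation nodes. -/
lemma peeling_eq {z : Fin (n + 1) → K} {w : Fin n → K} (h : GenericParams a z w) (hb : b ≠ 0)
    (g : Fin (n + 1) → Bool) (y : K) :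
    (∏ j, reflDiff (w j) y) *
        ∑ i, peelCoeff a b g z w y i * determinantForm a b (i.removeNth z) w =
      (y / b - b) * ∑ i, detCoeff a z w y i * determinantForm a b (i.removeNth z) w := by
  refine sub_eq_zero.1 ((isPolyFun_peeling_sub a b g z w _).eq_zero_of_injective
    (h.interpolationNode_injective g) ?_ (by simp; omega) y)
  rintro (⟨i, t⟩ | ⟨j, t⟩)
  · exact sub_eq_zero.2 (peeling_eq_at_node h.toRegularParams hb g _ i t rfl)
  · have hprod : ∏ k, reflDiff (w k) (signPow (w j) t) = 0 :=
      prod_eq_zero (mem_univ j) (reflDiff_signPow (h.w_ne_zero j) t)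
    simp only [interpolationNode, Sum.elim_inr]
    rw [hprod, sum_detCoeff_mul_determinantForm a b z w
        fun i => h.kernelDenom_signPow_ne_zero i j t,
      det_kernelMatrix_snoc_signPow h.a_ne_zero h.z_ne_zero (h.w_ne_zero j)]
    simp

theorem wavefunction_id_eq_determinantForm_of_genericParams (hb : b ≠ 0) (g : Fin n → Bool)
    {z w : Fin n → K} (h : GenericParams a z w) :
    wavefunction a b g id z w = determinantForm a b z w := by
  induction n with
  | zero => simp [wavefunction, determinantForm, permWeight, detPrefactor, pairProd]
  | succ n ih =>
    cases w using Fin.snocCases with | snoc w y => ?_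
    have hw : w = (Fin.snoc w y : Fin (n + 1) → K) ∘ Fin.castSucc := by ext; simp
    have hrest (i : Fin (n + 1)) : GenericParams a (i.removeNth z) w :=
      hw ▸ h.comp i.succAbove_right_injective (Fin.castSucc_injective n)
    have hzw : GenericParams a z w := hw ▸ h.comp Function.injective_id (Fin.castSucc_injective n)
    have hy (j : Fin n) : reflDiff (w j) y ≠ 0 := by
      simpa using h.reflDiff_ne_zero (Fin.castSucc_lt_last j).ne
    have hker (i : Fin (n + 1)) : kernelDenom a (z i) y ≠ 0 := by
      simpa using h.kernelDenom_ne_zero i (Fin.last n)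
    refine mul_left_cancel₀ (prod_ne_zero_iff.2 fun j (_ : j ∈ univ) => hy j) ?_
    rw [determinantForm_snoc a b z w hker hy, wavefunction_id_snoc, ← peeling_eq hzw hb g]
    simp only [ih _ (hrest _)]

end GenericCase

section Continuity

variable {K : Type*} [NontriviallyNormedField K] {n : ℕ} {a b : K} {z w : Fin n → K}

@[fun_prop]
lemma continuousAt_ite_const {X Y : Type*} [TopologicalSpace X] [TopologicalSpace Y] {f g : X → Y}
    {x : X} (p : Prop) [Decidable p] (hf : ContinuousAt f x) (hg : ContinuousAt g x) :
    ContinuousAt (fun y => if p then f y else g y) x := by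
  split_ifs <;> assumption

lemma continuousAt_wavefunction (ha : a ≠ 0) (b : K) (g : Fin n → Bool) (z w : Fin n → K) :
    ContinuousAt (fun q : K × (Fin n → K) => wavefunction q.1 b g id z q.2) (a, w) := by
  simp only [wavefunction, permWeight, siteWeight, boundaryWeight, vertexWeight, pairProd,
    kindExchange, exchangeFactor, div_eq_mul_inv]
  fun_prop (disch := exact ha)

lemma continuousAt_kernelDenom (ha : a ≠ 0) (x y : K) :
    ContinuousAt (fun q : K × K => kernelDenom q.1 x q.2) (a, y) := by
  simp only [kernelDenom, vertexWeight]
  fun_prop (disch := exact ha)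

lemma RegularParams.continuousAt_determinantForm (h : RegularParams a z w) (b : K) :
    ContinuousAt (fun q : K × (Fin n → K) => determinantForm q.1 b z q.2) (a, w) := by
  have hker (i j : Fin n) :
      ContinuousAt (fun q : K × (Fin n → K) => kernelDenom q.1 (z i) (q.2 j)) (a, w) :=
    ContinuousAt.comp_of_eq (f := fun q : K × (Fin n → K) => (q.1, q.2 j))
      (continuousAt_kernelDenom h.a_ne_zero (z i) (w j)) (by fun_prop) rfl
  have hdet : ContinuousAt (fun q : K × (Fin n → K) => (kernelMatrix q.1 z q.2).det) (a, w) := by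
    simp only [kernelMatrix, Matrix.det_apply, Matrix.of_apply]
    fun_prop (disch := exact h.kernelDenom_ne_zero _ _)
  have hdenc : ContinuousAt (fun v : K × (Fin n → K) =>
      pairProd (fun p q => sqAddInvSq (z q) - sqAddInvSq (z p)) *
        pairProd (fun p q => reflDiff (v.2 p) (v.2 q))) (a, w) := by
    simp only [pairProd, reflDiff]
    fun_prop
  have hden : pairProd (fun p q => sqAddInvSq (z q) - sqAddInvSq (z p)) *
      pairProd (fun p q => reflDiff (w p) (w q)) ≠ 0 :=
    mul_ne_zero (pairProd_ne_zero fun p q hpq => sub_ne_zero.2 (h.sqAddInvSq_injective.ne hpq.symm))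
      (pairProd_ne_zero fun p q hpq => h.reflDiff_ne_zero hpq)
  simp only [determinantForm, detPrefactor]
  exact (ContinuousAt.div (by fun_prop) hdenc hden).mul hdet

lemma RegularParams.eventually_comp_add (h : RegularParams a z w) :
    ∀ᶠ t in 𝓝 (0 : K), RegularParams (a + t) z fun j => w j + t := by
  have ha : ∀ᶠ t in 𝓝 (0 : K), a + t ≠ 0 :=
    ContinuousAt.eventually_ne (by fun_prop) (by simpa using h.a_ne_zero)
  have hw : ∀ᶠ t in 𝓝 (0 : K), ∀ j, w j + t ≠ 0 := eventually_all.2 fun j =>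
    ContinuousAt.eventually_ne (by fun_prop) (by simpa using h.w_ne_zero j)
  have hker : ∀ᶠ t in 𝓝 (0 : K), ∀ i j, kernelDenom (a + t) (z i) (w j + t) ≠ 0 :=
    eventually_all.2 fun i => eventually_all.2 fun j =>
      (ContinuousAt.comp_of_eq (continuousAt_kernelDenom h.a_ne_zero (z i) (w j))
        (f := fun t => (a + t, w j + t)) (by fun_prop) (by simp)).eventually_ne
        (by simpa using h.kernelDenom_ne_zero i j)
  have hrefl : ∀ᶠ t in 𝓝 (0 : K), ∀ j k, j ≠ k → reflDiff (w j + t) (w k + t) ≠ 0 :=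
    eventually_all.2 fun j => eventually_all.2 fun k => eventually_imp_distrib_left.2 fun hjk =>
      ContinuousAt.eventually_ne (by simp only [reflDiff]; fun_prop)
        (by simpa using h.reflDiff_ne_zero hjk)
  filter_upwards [ha, hw, hker, hrefl] with t ha hw hker hrefl
  exact ⟨ha, h.z_ne_zero, hw, hker, h.sq_sub_inv_sq_ne_zero, h.sqAddInvSq_injective,
    fun j k hjk => hrefl j k hjk⟩

lemma eventually_nhdsNE_add_pow_ne {m : ℕ} (hm : m ≠ 0) (x c : K) :
    ∀ᶠ t in 𝓝[≠] (0 : K), (x + t) ^ m ≠ c := by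
  classical
  have hroots : {y : K | y ^ m = c}.Finite := by
    convert finite_toSet (nthRoots m c).toFinset
    ext y
    simp [mem_nthRoots (Nat.pos_of_ne_zero hm)]
  exact nhdsNE_le_cofinite 0 (hroots.preimage (add_right_injective x).injOn).compl_mem_cofinite

lemma RegularParams.eventually_genericParams (h : RegularParams a z w) :
    ∀ᶠ t in 𝓝[≠] (0 : K), GenericParams (a + t) z fun j => w j + t := by
  have hnode : ∀ᶠ t in 𝓝[≠] (0 : K), ∀ i k s r,
      (a + t) ^ 4 ≠ (signPow (z i) s ^ 2 * signPow (z k) r ^ 2)⁻¹ := by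
    simp only [eventually_all]
    exact fun i k s r => eventually_nhdsNE_add_pow_ne four_ne_zero a _
  have hsq : ∀ᶠ t in 𝓝[≠] (0 : K), ∀ j, (w j + t) ^ 2 ≠ 1 :=
    eventually_all.2 fun j => eventually_nhdsNE_add_pow_ne two_ne_zero (w j) 1
  filter_upwards [h.eventually_comp_add.filter_mono nhdsWithin_le_nhds, hnode, hsq]
    with t hreg hnode hsq
  exact ⟨hreg, fun i k s r hone => hnode i k s r (eq_inv_of_mul_eq_one_left hone), hsq⟩

theorem RegularParams.wavefunction_id_eq_determinantForm (h : RegularParams a z w) (hb : b ≠ 0)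
    (g : Fin n → Bool) : wavefunction a b g id z w = determinantForm a b z w := by
  have hpath : Tendsto (fun t : K => (a + t, fun j => w j + t)) (𝓝[≠] 0) (𝓝 (a, w)) := by
    have : ContinuousAt (fun t : K => (a + t, fun j => w j + t)) 0 := by fun_prop
    simpa using this.tendsto.mono_left nhdsWithin_le_nhds
  refine tendsto_nhds_unique_of_eventuallyEq
    ((continuousAt_wavefunction h.a_ne_zero b g z w).tendsto.comp hpath)
    ((h.continuousAt_determinantForm b).tendsto.comp hpath) ?_
  filter_upwards [h.eventually_genericParams] with t ht
  exact wavefunction_id_eq_determinantForm_of_genericParams hb g ht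

end Continuity

section Merging

variable {K : Type*} [Field K] {M N N' : ℕ}

/-- The particle kinds on `Fin M` when its elements are listed by `e`: first the particles of `F`,
then those of `F̄`. -/
def mergedKind (e : Fin N ⊕ Fin N' ≃ Fin M) (i : Fin M) : Bool := (e.symm i).isLeft

lemma card_compl_eq (e : Fin N ⊕ Fin N' ≃ Fin M) {S : Finset (Fin M)} (hS : #S = N) :
    #Sᶜ = N' := by
  have := Fintype.card_congr e
  simp only [Fintype.card_sum, Fintype.card_fin] at this
  rw [card_compl, hS, Fintype.card_fin]
  omega

/-- The permutation of all particles that sends the sites in `S` to the particles of `F` by `σ` and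
the sites outside `S` to the particles of `F̄` by `σ'`. -/
def mergePerm (e : Fin N ⊕ Fin N' ≃ Fin M) (S : {S : Finset (Fin M) // #S = N})
    (σ : Equiv.Perm (Fin N)) (σ' : Equiv.Perm (Fin N')) : Equiv.Perm (Fin M) :=
  (finSumEquivOfFinset S.2 (card_compl_eq e S.2)).symm.trans ((Equiv.sumCongr σ σ').trans e)

section

variable (e : Fin N ⊕ Fin N' ≃ Fin M) (S : {S : Finset (Fin M) // #S = N})
  (σ : Equiv.Perm (Fin N)) (σ' : Equiv.Perm (Fin N'))

lemma mergePerm_orderEmbOfFin (k : Fin N) :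
    mergePerm e S σ σ' (S.1.orderEmbOfFin S.2 k) = e (.inl (σ k)) := by
  rw [← finSumEquivOfFinset_inl S.2 (card_compl_eq e S.2)]
  simp only [mergePerm, Equiv.trans_apply, Equiv.symm_apply_apply, Equiv.sumCongr_apply,
    Sum.map_inl]

lemma mergePerm_compl_orderEmbOfFin (k : Fin N') :
    mergePerm e S σ σ' (S.1ᶜ.orderEmbOfFin (card_compl_eq e S.2) k) = e (.inr (σ' k)) := by
  rw [← finSumEquivOfFinset_inr S.2 (card_compl_eq e S.2)]
  simp only [mergePerm, Equiv.trans_apply, Equiv.symm_apply_apply, Equiv.sumCongr_apply,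
    Sum.map_inr]

lemma mem_iff_mergedKind_mergePerm (p : Fin M) :
    p ∈ S.1 ↔ mergedKind e (mergePerm e S σ σ' p) = true := by
  obtain ⟨k | k, rfl⟩ := (finSumEquivOfFinset S.2 (card_compl_eq e S.2)).surjective p
  · simp [mergePerm_orderEmbOfFin, mergedKind]
  · simpa [mergePerm_compl_orderEmbOfFin, mergedKind] using
      mem_compl.1 (S.1ᶜ.orderEmbOfFin_mem (card_compl_eq e S.2) k)

end

lemma mergePerm_bijective (e : Fin N ⊕ Fin N' ≃ Fin M) :
    Function.Bijective fun x : {S : Finset (Fin M) // #S = N} ×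
      Equiv.Perm (Fin N) × Equiv.Perm (Fin N') => mergePerm e x.1 x.2.1 x.2.2 := by
  have hM : N + N' = M := by simpa using Fintype.card_congr e
  refine (Fintype.bijective_iff_injective_and_card _).2 ⟨?_, ?_⟩
  · rintro ⟨S, σ, σ'⟩ ⟨T, ρ, ρ'⟩ h
    simp only at h
    obtain rfl : S = T := by
      ext p
      rw [mem_iff_mergedKind_mergePerm e S σ σ', mem_iff_mergedKind_mergePerm e T ρ ρ', h]
    have hσ : σ = ρ := Equiv.ext fun k => by
      simpa [mergePerm_orderEmbOfFin] using congr($h (S.1.orderEmbOfFin S.2 k))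
    have hσ' : σ' = ρ' := Equiv.ext fun k => by
      simpa [mergePerm_compl_orderEmbOfFin] using
        congr($h (S.1ᶜ.orderEmbOfFin (card_compl_eq e S.2) k))
    rw [hσ, hσ']
  · have hle : N ≤ M := by omega
    obtain rfl : N' = M - N := by omega
    simp [Fintype.card_perm, ← mul_assoc, Nat.choose_mul_factorial_mul_factorial hle]

lemma permWeight_mergePerm (a b : K) (e : Fin N ⊕ Fin N' ≃ Fin M) (u w : Fin M → K)
    (S : {S : Finset (Fin M) // #S = N}) (σ : Equiv.Perm (Fin N)) (σ' : Equiv.Perm (Fin N')) :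
    permWeight a b (mergedKind e) id u w (mergePerm e S σ σ') =
      permWeight a b (fun _ => false) (S.1ᶜ.orderEmbOfFin (card_compl_eq e S.2))
          (fun k => u (e (.inr k))) w σ' *
        permWeight a b (fun _ => true) (S.1.orderEmbOfFin S.2) (fun k => u (e (.inl k))) w σ := by
  simp only [permWeight, pairProd_eq_prod_prod_ite,
    ← (finSumEquivOfFinset S.2 (card_compl_eq e S.2)).prod_comp, Fintype.prod_sum_type,
    finSumEquivOfFinset_inl, finSumEquivOfFinset_inr, mergePerm_orderEmbOfFin,
    mergePerm_compl_orderEmbOfFin, mergedKind, Equiv.symm_apply_apply, Sum.isLeft_inl,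
    Sum.isLeft_inr, OrderEmbedding.lt_iff_lt, kindExchange, if_true, reduceCtorEq,
    if_false, ite_self, prod_const_one, mul_one, one_mul, id]
  ring

theorem wavefunction_mergedKind (a b : K) (e : Fin N ⊕ Fin N' ≃ Fin M) (z w : Fin M → K) :
    wavefunction a b (mergedKind e) id z w = ∑ S : {S : Finset (Fin M) // #S = N},
      wavefunction a b (fun _ => false) (S.1ᶜ.orderEmbOfFin (card_compl_eq e S.2))
          (fun k => z (e (.inr k))) w *
        wavefunction a b (fun _ => true) (S.1.orderEmbOfFin S.2) (fun k => z (e (.inl k))) w := by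
  simp only [wavefunction]
  rw [← (mergePerm_bijective e).sum_comp, Fintype.sum_prod_type]
  refine sum_congr rfl fun S _ => ?_
  rw [Fintype.sum_prod_type, sum_comm, sum_mul_sum]
  refine sum_congr rfl fun σ' _ => sum_congr rfl fun σ _ => ?_
  rw [sum_mul_sum, ← (e.arrowCongr (Equiv.refl Bool)).sum_comp,
    ← (Equiv.sumArrowEquivProdArrow _ _ Bool).symm.sum_comp, Fintype.sum_prod_type, sum_comm]
  refine sum_congr rfl fun τ' _ => sum_congr rfl fun τ _ => ?_
  rw [permWeight_mergePerm]
  simp [Equiv.arrowCongr, Equiv.sumArrowEquivProdArrow]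

end Merging

section SymmetricFunctions

lemma zpow_neg_two (x : ℂ) : x ^ (-2 : ℤ) = x⁻¹ ^ 2 := by
  rw [zpow_neg, inv_pow, zpow_ofNat]

lemma zpow_eps (z : ℂ) {N : ℕ} (τ : Fin N → Bool) (j : Fin N) :
    z ^ eps τ j = signPow z (τ j) := by
  unfold eps signPow
  split_ifs <;> simp

lemma zpow_two_mul_eps (z : ℂ) {N : ℕ} (τ : Fin N → Bool) (j : Fin N) :
    z ^ (2 * eps τ j) = signPow z (τ j) ^ 2 := by
  rw [mul_comm, zpow_mul, zpow_eps, zpow_ofNat]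

lemma pairFactor_eq_exchangeFactor (a x y : ℂ) (s t : ℤ) :
    pairFactor a x y s t = exchangeFactor a (x ^ s) (y ^ t) := by
  simp only [pairFactor, exchangeFactor, zpow_neg, zpow_ofNat, ← inv_pow]

/-- The factor in front of the sums defining `F` and `F̄`. -/
noncomputable def prefactor (a : ℂ) {ι : Type*} [Fintype ι] (z : ι → ℂ) : ℂ :=
  ∏ j, (a ^ (2:ℤ) - a ^ (-2:ℤ)) * (-(a ^ (2:ℤ) * z j ^ (2:ℤ)) + a ^ (-2:ℤ) * z j ^ (-2:ℤ))

lemma prod_ite_lt_ite_gt {M x : ℕ} {p : Fin M} (hx : x = (p : ℕ) + 1) (f h : Fin M → ℂ) :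
    ∏ j, (if j < p then f j else if p < j then h j else 1) =
      (∏ j ∈ univ.filter (fun j : Fin M => (j : ℕ) + 1 < x), f j) *
        ∏ j ∈ univ.filter (fun j : Fin M => x ≤ (j : ℕ)), h j := by
  rw [prod_filter, prod_filter, ← prod_mul_distrib]
  refine prod_congr rfl fun j _ => ?_
  obtain hj | rfl | hj := lt_trichotomy j p
  · simp [hx, hj, hj.not_gt]
  · simp [hx]
  · simp [hx, hj, hj.not_gt]

lemma FF_eq_prefactor_mul_wavefunction (a b : ℂ) {M N : ℕ} (z : Fin N → ℂ) (w : Fin M → ℂ)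
    {x : ℕ → ℕ} {p : Fin N → Fin M} (hx : ∀ k : Fin N, x k = p k + 1) :
    FF a b M N z w x = prefactor a z * wavefunction a b (fun _ => true) p z w := by
  unfold FF prefactor wavefunction
  rw [prod_mul_distrib, prod_const, card_univ, Fintype.card_fin]
  congr 1
  refine sum_congr rfl fun σ _ => sum_congr rfl fun τ _ => ?_
  rw [← Equiv.prod_comp σ]
  simp only [zpow_neg, zpow_eps, zpow_two_mul_eps, pairFactor_eq_exchangeFactor, permWeight,
    pairProd, kindExchange, siteWeight, prod_ite_lt_ite_gt (hx _), prod_mul_distrib,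
    boundaryWeight, vertexWeight, if_true, Bool.not_true, Bool.false_eq_true, if_false, inv_inv,
    inv_pow]
  ring

lemma FBar_eq_prefactor_mul_wavefunction (a b : ℂ) {M N : ℕ} (z : Fin N → ℂ) (w : Fin M → ℂ)
    {x : ℕ → ℕ} {p : Fin N → Fin M} (hx : ∀ k : Fin N, x k = p k + 1) :
    FBar a b M N z w x = prefactor a z * wavefunction a b (fun _ => false) p z w := by
  unfold FBar prefactor wavefunction
  rw [prod_mul_distrib, prod_const, card_univ, Fintype.card_fin]
  congr 1
  refine sum_congr rfl fun σ _ => sum_congr rfl fun τ _ => ?_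
  rw [← Equiv.prod_comp σ]
  simp only [zpow_neg, zpow_eps, zpow_two_mul_eps, pairFactor_eq_exchangeFactor, permWeight,
    pairProd, kindExchange, siteWeight, prod_ite_lt_ite_gt (hx _), prod_mul_distrib,
    boundaryWeight, vertexWeight, if_true, Bool.not_false, Bool.false_eq_true, if_false, inv_inv,
    inv_pow]
  ring

lemma xfun_eq_orderEmbOfFin {M N : ℕ} {S : Finset (Fin M)} (hS : #S = N) (k : Fin N) :
    xfun S k = S.orderEmbOfFin hS k + 1 := by
  have hk : (k : ℕ) < (S.sort (· ≤ ·)).length := by simp [hS]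
  rw [xfun, List.getD_eq_getElem _ _ (by simpa using hk), List.getElem_map, orderEmbOfFin_apply]
  rfl

theorem sum_FBar_mul_FF (a b : ℂ) {M N N' : ℕ} (e : Fin N ⊕ Fin N' ≃ Fin M) (z w : Fin M → ℂ) :
    ∑ S ∈ powersetCard N (univ : Finset (Fin M)),
      FBar a b M N' (fun k => z (e (.inr k))) w (xfun Sᶜ) *
        FF a b M N (fun k => z (e (.inl k))) w (xfun S) =
      prefactor a z * wavefunction a b (mergedKind e) id z w := by
  have hpre : prefactor a z =
      prefactor a (fun k => z (e (.inr k))) * prefactor a (fun k => z (e (.inl k))) := by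
    rw [prefactor, ← e.prod_comp, Fintype.prod_sum_type, mul_comm, prefactor, prefactor]
  rw [sum_subtype (p := fun S : Finset (Fin M) => #S = N) _ (by simp), wavefunction_mergedKind,
    mul_sum, hpre]
  refine sum_congr rfl fun S _ => ?_
  rw [FBar_eq_prefactor_mul_wavefunction a b _ w (xfun_eq_orderEmbOfFin (card_compl_eq e S.2)),
    FF_eq_prefactor_mul_wavefunction a b _ w (xfun_eq_orderEmbOfFin S.2)]
  exact mul_mul_mul_comm _ _ _ _

end SymmetricFunctions

section LaurentForm

variable {a b : ℂ} {M : ℕ} {z w : Fin M → ℂ}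

/-- The denominator of an entry of the determinant in the Cauchy identity. -/
noncomputable def laurentDenom (a z w : ℂ) : ℂ :=
  (a ^ (2:ℤ) + a ^ (-2:ℤ) - z ^ (-2:ℤ) * w - z ^ (2:ℤ) * w⁻¹) *
    (a ^ (2:ℤ) + a ^ (-2:ℤ) - z ^ (-2:ℤ) * w⁻¹ - z ^ (2:ℤ) * w)

lemma kernelDenom_eq_sq_mul_laurentDenom {z w : ℂ} (ha : a ≠ 0) (hz : z ≠ 0) (hw : w ≠ 0) :
    kernelDenom a z w = w ^ 2 * laurentDenom a z w := by
  simp only [laurentDenom, kernelDenom, vertexWeight, zpow_neg_two, zpow_ofNat, if_true,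
    Bool.false_eq_true, if_false]
  field_simp
  ring

lemma prod_prod_kernelDenom (ha : a ≠ 0) (hz : ∀ i, z i ≠ 0) (hw : ∀ j, w j ≠ 0) :
    ∏ i, ∏ j, kernelDenom a (z i) (w j) =
      (∏ j, (w j ^ 2) ^ M) * ∏ i, ∏ j, laurentDenom a (z i) (w j) := by
  simp only [kernelDenom_eq_sq_mul_laurentDenom ha (hz _) (hw _), prod_mul_distrib, prod_const,
    card_fin, prod_pow]

lemma det_kernelMatrix (ha : a ≠ 0) (hz : ∀ i, z i ≠ 0) (hw : ∀ j, w j ≠ 0) :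
    (kernelMatrix a z w).det = (∏ j, (w j ^ 2)⁻¹) *
      (Matrix.of fun i j => (laurentDenom a (z i) (w j))⁻¹).det := by
  rw [← Matrix.det_mul_row]
  congr 1
  ext i j
  simp [kernelMatrix, kernelDenom_eq_sq_mul_laurentDenom ha (hz i) (hw j), mul_comm]

lemma pairProd_reflDiff (hw : ∀ j, w j ≠ 0) :
    pairProd (fun p q => reflDiff (w p) (w q)) = (∏ j, w j ^ (M - 1)) *
      pairProd fun p q => (-(w q)⁻¹ + (w p)⁻¹) * (w p * w q - 1) := by
  rw [← pairProd_apply_mul_apply, ← pairProd_mul]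
  congr 1
  ext p q
  have := hw p
  have := hw q
  simp only [reflDiff]
  field_simp
  ring

lemma prefactor_mul_prod_sub (hb : b ≠ 0) (hw : ∀ j, w j ≠ 0) :
    prefactor a z * ∏ j, (w j / b - b) = (a ^ (2:ℤ) - a ^ (-2:ℤ)) ^ M * (∏ j, w j) *
      ∏ i, (b * (w i)⁻¹ - b⁻¹) * (a ^ (2:ℤ) * z i ^ (2:ℤ) - a ^ (-2:ℤ) * z i ^ (-2:ℤ)) := by
  rw [← Fin.prod_const, prefactor, ← prod_mul_distrib, ← prod_mul_distrib, ← prod_mul_distrib]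
  refine prod_congr rfl fun j _ => ?_
  have hbw : w j / b - b = -(w j * (b * (w j)⁻¹ - b⁻¹)) := by
    have := hw j
    field_simp
    ring
  rw [hbw]
  ring

lemma pairProd_laurent (hz : ∀ i, z i ≠ 0) :
    pairProd (fun p q => (-((z p)⁻¹ * z q) + z p * (z q)⁻¹) * ((z p)⁻¹ * (z q)⁻¹ - z p * z q) *
        (-(w q)⁻¹ + (w p)⁻¹) * (w p * w q - 1)) =
      pairProd (fun p q => sqAddInvSq (z q) - sqAddInvSq (z p)) *
        pairProd fun p q => (-(w q)⁻¹ + (w p)⁻¹) * (w p * w q - 1) := by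
  rw [← pairProd_mul]
  congr 1
  ext p q
  rw [← mul_sub_mul_sub_eq_sqAddInvSq_sub (hz q) (hz p)]
  ring

theorem prefactor_mul_determinantForm (ha : a ≠ 0) (hb : b ≠ 0) (hz : ∀ i, z i ≠ 0)
    (hw : ∀ j, w j ≠ 0) :
    prefactor a z * determinantForm a b z w =
      (a ^ (2:ℤ) - a ^ (-2:ℤ)) ^ M * (∏ i, w i ^ M) *
      (∏ i, (b * (w i)⁻¹ - b⁻¹) * (a ^ (2:ℤ) * z i ^ (2:ℤ) - a ^ (-2:ℤ) * z i ^ (-2:ℤ))) *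
      ((∏ i, ∏ j, laurentDenom a (z i) (w j)) /
        pairProd (fun p q => (-((z p)⁻¹ * z q) + z p * (z q)⁻¹) *
          ((z p)⁻¹ * (z q)⁻¹ - z p * z q) * (-(w q)⁻¹ + (w p)⁻¹) * (w p * w q - 1))) *
      (Matrix.of fun i j => (laurentDenom a (z i) (w j))⁻¹).det := by
  have hpow : ∏ j, w j ^ M = (∏ j, w j) * ((∏ j, (w j ^ 2) ^ M) * (∏ j, (w j ^ 2)⁻¹) /
      ∏ j, w j ^ (M - 1)) := by
    rw [← prod_mul_distrib, ← prod_div_distrib, ← prod_mul_distrib]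
    refine prod_congr rfl fun j _ => ?_
    obtain ⟨m, hm⟩ := Nat.exists_eq_add_one_of_ne_zero j.pos.ne'
    have := hw j
    simp only [hm, Nat.add_sub_cancel]
    field_simp
    ring
  rw [determinantForm, detPrefactor, prod_prod_kernelDenom ha hz hw, det_kernelMatrix ha hz hw,
    pairProd_reflDiff hw, pairProd_laurent hz, hpow]
  set Q := ∏ i, ∏ j, laurentDenom a (z i) (w j)
  set D := pairProd fun p q => sqAddInvSq (z q) - sqAddInvSq (z p)
  set E := pairProd fun p q => (-(w q)⁻¹ + (w p)⁻¹) * (w p * w q - 1)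
  set T := (Matrix.of fun i j => (laurentDenom a (z i) (w j))⁻¹).det
  calc
    _ = prefactor a z * (∏ j, (w j / b - b)) * ((∏ j, (w j ^ 2) ^ M) * (∏ j, (w j ^ 2)⁻¹) /
          ∏ j, w j ^ (M - 1)) * (Q / (D * E)) * T := by
      simp only [div_eq_mul_inv, mul_inv]
      ring
    _ = _ := by
      rw [prefactor_mul_prod_sub hb hw]
      ring

lemma sqAddInvSq_injective (hz : ∀ i, z i ≠ 0) (hmul : ∀ j k, j ≠ k → z j ^ 2 * z k ^ 2 ≠ 1)
    (hne : ∀ j k, j ≠ k → z j ^ 2 ≠ z k ^ 2) : Function.Injective fun i => sqAddInvSq (z i) := by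
  intro i k h
  by_contra hik
  have hprod : (z i ^ 2 - z k ^ 2) * (z i ^ 2 * z k ^ 2 - 1) = 0 := by
    have := hz i
    have := hz k
    simp only [sqAddInvSq] at h
    field_simp at h
    linear_combination h
  exact mul_ne_zero (sub_ne_zero.2 (hne i k hik)) (sub_ne_zero.2 (hmul i k hik)) hprod

lemma regularParams_of_laurentDenom_ne_zero (ha : a ≠ 0) (hz : ∀ i, z i ≠ 0) (hw : ∀ j, w j ≠ 0)
    (hz4 : ∀ i, z i ^ 4 ≠ 1) (hzmul : ∀ j k, j ≠ k → z j ^ 2 * z k ^ 2 ≠ 1)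
    (hzne : ∀ j k, j ≠ k → z j ^ 2 ≠ z k ^ 2) (hwne : ∀ j k, j ≠ k → w j ≠ w k)
    (hwmul : ∀ j k, j ≠ k → w j * w k ≠ 1) (hdenom : ∀ i j, laurentDenom a (z i) (w j) ≠ 0) :
    RegularParams a z w where
  a_ne_zero := ha
  z_ne_zero := hz
  w_ne_zero := hw
  kernelDenom_ne_zero i j := by
    rw [kernelDenom_eq_sq_mul_laurentDenom ha (hz i) (hw j)]
    exact mul_ne_zero (pow_ne_zero 2 (hw j)) (hdenom i j)
  sq_sub_inv_sq_ne_zero i h := hz4 i <| by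
    have := hz i
    field_simp at h
    linear_combination h
  sqAddInvSq_injective := sqAddInvSq_injective hz hzmul hzne
  reflDiff_ne_zero j k hjk :=
    mul_ne_zero (sub_ne_zero.2 (hwne k j hjk.symm)) (sub_ne_zero.2 (hwmul j k hjk))

end LaurentForm

/-- Theorem 6.2: the Cauchy-type identity obtained by evaluating the reflecting-end
domain wall boundary partition function in two ways.  The sum runs over all subsets
`S ⊆ {1,…,M}` of cardinality `N` (encoding the increasing sequence `x`), with
complement `Sᶜ` (encoding `x̄`); `xfun` lists the elements in increasing order in
1-based labelling.  The variables `z_1,…,z_{M−N}` go to `F̄` and `z_{M−N+1},…,z_M`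
to `F`. -/
theorem cauchy_identity (a b : ℂ) (M N : ℕ) (hM : 1 ≤ M) (hNM : N ≤ M)
    (z w : Fin M → ℂ)
    (ha : a ≠ 0) (hb : b ≠ 0) (hz : ∀ j, z j ≠ 0) (hw : ∀ j, w j ≠ 0)
    (hz4 : ∀ j, z j ^ 4 ≠ 1)
    (hzz : ∀ j k, j ≠ k → z j ^ 2 * z k ^ 2 ≠ 1)
    (hzz' : ∀ j k, j ≠ k → z j ^ 2 ≠ z k ^ 2)
    (hww : ∀ j k, j ≠ k → w j ≠ w k)
    (hww1 : ∀ j k, j ≠ k → w j * w k ≠ 1)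
    (hdet : ∀ i j : Fin M,
      (a ^ (2:ℤ) + a ^ (-2:ℤ) - z i ^ (-2:ℤ) * w j - z i ^ (2:ℤ) * (w j)⁻¹) ≠ 0 ∧
      (a ^ (2:ℤ) + a ^ (-2:ℤ) - z i ^ (-2:ℤ) * (w j)⁻¹ - z i ^ (2:ℤ) * w j) ≠ 0) :
    ∑ S ∈ Finset.powersetCard N (Finset.univ : Finset (Fin M)),
      FBar a b M (M - N) (fun k => z (Fin.castLE (Nat.sub_le M N) k)) w (xfun Sᶜ) *
      FF a b M N (fun k : Fin N => z ⟨M - N + (k : ℕ), by have := k.isLt; omega⟩) w (xfun S)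
    = (a ^ (2:ℤ) - a ^ (-2:ℤ)) ^ M * (∏ i, w i ^ M) *
      (∏ i, (b * (w i)⁻¹ - b⁻¹) * (a ^ (2:ℤ) * z i ^ (2:ℤ) - a ^ (-2:ℤ) * z i ^ (-2:ℤ))) *
      ((∏ i, ∏ j,
        (a ^ (2:ℤ) + a ^ (-2:ℤ) - z i ^ (-2:ℤ) * w j - z i ^ (2:ℤ) * (w j)⁻¹) *
        (a ^ (2:ℤ) + a ^ (-2:ℤ) - z i ^ (-2:ℤ) * (w j)⁻¹ - z i ^ (2:ℤ) * w j)) /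
       (∏ p ∈ Finset.univ.filter (fun p : Fin M × Fin M => p.1 < p.2),
        (-((z p.1)⁻¹ * z p.2) + z p.1 * (z p.2)⁻¹) *
        ((z p.1)⁻¹ * (z p.2)⁻¹ - z p.1 * z p.2) *
        (-(w p.2)⁻¹ + (w p.1)⁻¹) * (w p.1 * w p.2 - 1))) *
      Matrix.det (Matrix.of fun i j : Fin M =>
        ((a ^ (2:ℤ) + a ^ (-2:ℤ) - z i ^ (-2:ℤ) * w j - z i ^ (2:ℤ) * (w j)⁻¹) *
         (a ^ (2:ℤ) + a ^ (-2:ℤ) - z i ^ (-2:ℤ) * (w j)⁻¹ - z i ^ (2:ℤ) * w j))⁻¹) := by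
  have hreg : RegularParams a z w := regularParams_of_laurentDenom_ne_zero ha hz hw hz4 hzz hzz'
    hww hww1 fun i j => mul_ne_zero (hdet i j).1 (hdet i j).2
  let e : Fin N ⊕ Fin (M - N) ≃ Fin M :=
    (Equiv.sumComm _ _).trans (finSumFinEquiv.trans (finCongr (Nat.sub_add_cancel hNM)))
  calc
    _ = prefactor a z * wavefunction a b (mergedKind e) id z w := sum_FBar_mul_FF a b e z w
    _ = prefactor a z * determinantForm a b z w := by
      rw [hreg.wavefunction_id_eq_determinantForm hb]
    _ = _ := prefactor_mul_determinantForm ha hb hz hw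
end

section
/- For nonzero complex numbers a, b with a⁴ ≠ 1 and nonzero complex variables z_1,…,z_M with z_i⁴ ≠ 1, z_i² ≠ z_j², z_i²z_j² ≠ 1 for i ≠ j, and (a²−z_i²)(1−a²z_i²) ≠ 0 for all i, the limit as (w_1,…,w_M) → (1,…,1) of the inhomogeneous determinant expression (a²−a⁻²)^M ∏_{i=1}^M w_i^M ∏_{i=1}^M (b w_i⁻¹−b⁻¹)(a²z_i²−a⁻²z_i⁻²) × [∏_{i,j=1}^M (a²+a⁻²−z_i⁻²w_j−z_i²w_j⁻¹)(a²+a⁻²−z_i⁻²w_j⁻¹−z_i²w_j)] / [∏_{1≤i<j≤M}(−z_i⁻¹z_j+z_i z_j⁻¹)(z_i⁻¹z_j⁻¹−z_i z_j)(−w_j⁻¹+w_i⁻¹)(w_i w_j−1)] × det_{M×M}( 1 / [(a²+a⁻²−z_i⁻²w_j−z_i²w_j⁻¹)(a²+a⁻²−z_i⁻²w_j⁻¹−z_i²w_j)] ) exists and equals a^{2M}(b−b⁻¹)^M ∏_{i=1}^M [(a²z_i²−a⁻²z_i⁻²)/(1−z_i⁻⁴)] × [∏_{i=1}^M (a²+a⁻²−z_i⁻²−z_i²)^{2M}]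 / [∏_{1≤i<j≤M}(−z_i⁻¹z_j+z_i z_j⁻¹)(z_i⁻¹z_j⁻¹−z_i z_j)] × det_{M×M}( (a²z_i²)^{j−1}/(a²−z_i²)^{2j} − (a²z_i²)^{j−1}/(1−a²z_i²)^{2j} ). -/
open Finset

/-!
In the variable `x = w + w⁻¹` every entry of the inhomogeneous determinant becomes
`((P i - x j) * (Q i - x j))⁻¹`, and the `w`-part of the denominator becomes the Vandermonde product
of the `x j`.  Partial fractions turn each entry into a multiple of `(Q i - x j)⁻¹ - (P i - x j)⁻¹`,
whose Newton interpolation at the nodes `x` is explicit.  Passing to Newton coefficients factors out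
the Vandermonde product exactly, and the remaining matrix of divided differences is continuous at
the coalescence point `w = 1`.
-/

section NewtonInterpolation

variable {ι R K : Type*} [Fintype ι] [LinearOrder ι] [CommRing R] [Field K]

/-- The Newton basis polynomials `∏ m < k, (X - t m)` (rows) evaluated at the nodes `t j`
(columns). -/
def newtonMatrix (t : ι → R) : Matrix ι ι R :=
  .of fun k j => ∏ m with m < k, (t j - t m)

lemma newtonMatrix_isUpperTriangular (t : ι → R) : (newtonMatrix t).IsUpperTriangular :=
  fun _ j hjk => prod_eq_zero (mem_filter.2 ⟨mem_univ j, hjk⟩) (sub_self _)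

lemma det_newtonMatrix (t : ι → R) :
    (newtonMatrix t).det = ∏ p : ι × ι with p.1 < p.2, (t p.2 - t p.1) := by
  rw [Matrix.det_of_isUpperTriangular (newtonMatrix_isUpperTriangular t), prod_filter,
    ← univ_product_univ, prod_product_right]
  exact prod_congr rfl fun _ _ => prod_filter _ _

/-- The divided difference of `x ↦ (r - x)⁻¹` at the nodes `t m`, `m ≤ k`. -/
def resolventDividedDiff (r : K) (t : ι → K) (k : ι) : K :=
  ∏ m with m ≤ k, (r - t m)⁻¹

lemma resolventDividedDiff_eq_mul_prod_lt (r : K) (t : ι → K) (k : ι) :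
    resolventDividedDiff r t k = (r - t k)⁻¹ * ∏ m with m < k, (r - t m)⁻¹ := by
  have filter_le : univ.filter (· ≤ k) = insert k (univ.filter (· < k)) := by
    ext m
    simp [le_iff_eq_or_lt]
  rw [resolventDividedDiff, filter_le, prod_insert (by simp)]

lemma resolventDividedDiff_const {n : ℕ} (r c : K) (k : Fin n) :
    resolventDividedDiff r (fun _ => c) k = (r - c)⁻¹ ^ ((k : ℕ) + 1) := by
  rw [resolventDividedDiff, prod_const, filter_ge_eq_Iic, Fin.card_Iic]

lemma inv_sub_eq_sum_resolventDividedDiff_mul_newtonMatrix {r : K} {t : ι → K}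
    (h : ∀ m, r - t m ≠ 0) (j : ι) :
    (r - t j)⁻¹ = ∑ k, resolventDividedDiff r t k * newtonMatrix t k j := by
  have one_sub_ratio (m : ι) : 1 - (r - t j) * (r - t m)⁻¹ = (t j - t m) * (r - t m)⁻¹ := by
    field_simp [h m]
    ring
  have ordered := prod_one_sub_ordered univ fun m => (r - t j) * (r - t m)⁻¹
  simp only [one_sub_ratio] at ordered
  -- The factor `m = j` vanishes, so the ordered expansion of the product is exact.
  rw [prod_eq_zero (mem_univ j) (by rw [sub_self, zero_mul])] at ordered
  refine inv_eq_of_mul_eq_one_right ?_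
  rw [sub_eq_zero.1 ordered.symm, mul_sum]
  refine sum_congr rfl fun k _ => ?_
  rw [resolventDividedDiff_eq_mul_prod_lt, newtonMatrix, Matrix.of_apply, prod_mul_distrib]
  ring

lemma continuousAt_resolventDividedDiff [TopologicalSpace K] [IsTopologicalDivisionRing K]
    {r : K} {t₀ : ι → K} {k : ι} (h : ∀ m ≤ k, r - t₀ m ≠ 0) :
    ContinuousAt (fun t => resolventDividedDiff r t k) t₀ :=
  tendsto_finsetProd _ fun m hm =>
    ((continuous_const.sub (continuous_apply m)).continuousAt).inv₀ (h m (mem_filter.1 hm).2)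

end NewtonInterpolation

section Joukowsky

variable {K : Type*} [Field K]

/-- The Joukowsky map `x ↦ x + x⁻¹`, the quotient by the symmetry `x ↔ x⁻¹` of the reflecting
end. -/
def joukowsky (x : K) : K := x + x⁻¹

lemma joukowsky_sub_joukowsky {x y : K} (hx : x ≠ 0) (hy : y ≠ 0) :
    joukowsky y - joukowsky x = (-y⁻¹ + x⁻¹) * (x * y - 1) := by
  unfold joukowsky
  field_simp
  ring

lemma joukowsky_sub_joukowsky_ne_zero {x y : K} (hx : x ≠ 0) (hy : y ≠ 0) (hxy : x ≠ y)
    (hxy1 : x * y ≠ 1) : joukowsky y - joukowsky x ≠ 0 := by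
  rw [joukowsky_sub_joukowsky hx hy, neg_add_eq_sub]
  exact mul_ne_zero (sub_ne_zero.2 fun h => hxy (inv_injective h)) (sub_ne_zero.2 hxy1)

lemma joukowsky_mul_sub_joukowsky_one {x y : K} (hx : x ≠ 0) (hy : y ≠ 0) :
    joukowsky (x * y) - joukowsky 1 = (1 - x * y) ^ 2 / (x * y) := by
  unfold joukowsky
  field_simp
  ring

lemma joukowsky_div_sub_joukowsky_one {x y : K} (hx : x ≠ 0) (hy : y ≠ 0) :
    joukowsky (x / y) - joukowsky 1 = (x - y) ^ 2 / (x * y) := by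
  unfold joukowsky
  field_simp
  ring

lemma joukowsky_mul_sub_joukowsky_div {x y : K} (hx : x ≠ 0) (hy : y ≠ 0) :
    joukowsky (x * y) - joukowsky (x / y) = (x - x⁻¹) * (y - y⁻¹) := by
  unfold joukowsky
  field_simp
  ring

lemma continuousAt_joukowsky [TopologicalSpace K] [IsTopologicalDivisionRing K] {x : K}
    (hx : x ≠ 0) : ContinuousAt joukowsky x :=
  continuousAt_id.add (continuousAt_inv₀ hx)

end Joukowsky

lemma sq_sub_inv_sq_ne_zero {K : Type*} [Field K] {x : K} (hx : x ≠ 0) (hx4 : x ^ 4 ≠ 1) :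
    x ^ 2 - (x ^ 2)⁻¹ ≠ 0 := by
  refine sub_ne_zero.2 fun h => hx4 ?_
  calc x ^ 4 = x ^ 2 * x ^ 2 := by ring
    _ = x ^ 2 * (x ^ 2)⁻¹ := by rw [← h]
    _ = 1 := mul_inv_cancel₀ (pow_ne_zero 2 hx)

section DomainWall

variable {K : Type*} [Field K] {M : ℕ}

/-- The reciprocal of an entry of the Tsuchiya-Kuperberg determinant, for spectral parameters `z`
and `w`. -/
def reflectionWeight (a z w : K) : K :=
  (a ^ (2:ℤ) + a ^ (-2:ℤ) - z ^ (-2:ℤ) * w - z ^ (2:ℤ) * w⁻¹) *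
    (a ^ (2:ℤ) + a ^ (-2:ℤ) - z ^ (-2:ℤ) * w⁻¹ - z ^ (2:ℤ) * w)

/-- The part of the Vandermonde-type denominator that depends on `z`. -/
def spectralVandermonde (z : Fin M → K) : K :=
  ∏ p : Fin M × Fin M with p.1 < p.2,
    (-((z p.1)⁻¹ * z p.2) + z p.1 * (z p.2)⁻¹) * ((z p.1)⁻¹ * (z p.2)⁻¹ - z p.1 * z p.2)

/-- The Tsuchiya-Kuperberg determinant expression for the domain wall boundary partition
function. -/
def tsuchiyaKuperberg (a b : K) (z w : Fin M → K) : K :=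
  (a ^ (2:ℤ) - a ^ (-2:ℤ)) ^ M * (∏ i, w i ^ M) *
    (∏ i, (b * (w i)⁻¹ - b⁻¹) * (a ^ (2:ℤ) * z i ^ (2:ℤ) - a ^ (-2:ℤ) * z i ^ (-2:ℤ))) *
    ((∏ i, ∏ j, reflectionWeight a (z i) (w j)) /
      (∏ p : Fin M × Fin M with p.1 < p.2,
        (-((z p.1)⁻¹ * z p.2) + z p.1 * (z p.2)⁻¹) *
        ((z p.1)⁻¹ * (z p.2)⁻¹ - z p.1 * z p.2) *
        (-(w p.2)⁻¹ + (w p.1)⁻¹) * (w p.1 * w p.2 - 1))) *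
    Matrix.det (.of fun i j => (reflectionWeight a (z i) (w j))⁻¹)

/-- The matrix of the homogeneous limit; its column index starts at `0`, so `j` stands for
`j - 1` in the usual formula. -/
def homogeneousMatrix (a : K) (z : Fin M → K) : Matrix (Fin M) (Fin M) K :=
  .of fun i j =>
    (a ^ 2 * z i ^ 2) ^ (j : ℕ) / (a ^ 2 - z i ^ 2) ^ (2 * ((j : ℕ) + 1)) -
      (a ^ 2 * z i ^ 2) ^ (j : ℕ) / (1 - a ^ 2 * z i ^ 2) ^ (2 * ((j : ℕ) + 1))

/-- The value of the partition function in the homogeneous limit `w = 1`. -/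
def homogeneousTsuchiyaKuperberg (a b : K) (z : Fin M → K) : K :=
  a ^ (2 * M) * (b - b⁻¹) ^ M *
    (∏ i, (a ^ (2:ℤ) * z i ^ (2:ℤ) - a ^ (-2:ℤ) * z i ^ (-2:ℤ)) / (1 - z i ^ (-4:ℤ))) *
    ((∏ i, (a ^ (2:ℤ) + a ^ (-2:ℤ) - z i ^ (-2:ℤ) - z i ^ (2:ℤ)) ^ (2 * M)) /
      spectralVandermonde z) *
    (homogeneousMatrix a z).det

/-- The factors of `tsuchiyaKuperberg` that are regular at `w = 1`. -/
def regularPrefactor (a b : K) (z w : Fin M → K) : K :=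
  (a ^ (2:ℤ) - a ^ (-2:ℤ)) ^ M * (∏ i, w i ^ M) *
    (∏ i, (b * (w i)⁻¹ - b⁻¹) * (a ^ (2:ℤ) * z i ^ (2:ℤ) - a ^ (-2:ℤ) * z i ^ (-2:ℤ))) *
    ((∏ i, ∏ j, reflectionWeight a (z i) (w j)) / spectralVandermonde z)

/-- The Newton coefficients of the rows of the Tsuchiya-Kuperberg matrix, regarded as functions of
`joukowsky (w j)`. -/
def newtonCoeffMatrix (a : K) (z w : Fin M → K) : Matrix (Fin M) (Fin M) K :=
  .of fun i k => (joukowsky (a ^ 2 * z i ^ 2) - joukowsky (a ^ 2 / z i ^ 2))⁻¹ *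
    (resolventDividedDiff (joukowsky (a ^ 2 / z i ^ 2)) (fun j => joukowsky (w j)) k -
      resolventDividedDiff (joukowsky (a ^ 2 * z i ^ 2)) (fun j => joukowsky (w j)) k)

lemma reflectionWeight_eq_mul {a z w : K} (ha : a ≠ 0) (hz : z ≠ 0) (hw : w ≠ 0) :
    reflectionWeight a z w =
      (joukowsky (a ^ 2 * z ^ 2) - joukowsky w) * (joukowsky (a ^ 2 / z ^ 2) - joukowsky w) := by
  simp only [reflectionWeight, joukowsky, zpow_neg, zpow_ofNat]
  field_simp
  ring

lemma reflectionWeight_one_ne_zero {a z : K} (ha : a ≠ 0) (hz : z ≠ 0)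
    (haz : (a ^ 2 - z ^ 2) * (1 - a ^ 2 * z ^ 2) ≠ 0) : reflectionWeight a z 1 ≠ 0 := by
  have ha2 := pow_ne_zero 2 ha
  have hz2 := pow_ne_zero 2 hz
  obtain ⟨hsub, hmul⟩ := mul_ne_zero_iff.1 haz
  rw [reflectionWeight_eq_mul ha hz one_ne_zero, joukowsky_mul_sub_joukowsky_one ha2 hz2,
    joukowsky_div_sub_joukowsky_one ha2 hz2]
  positivity

lemma continuousAt_reflectionWeight [TopologicalSpace K] [IsTopologicalDivisionRing K]
    (a z : K) {w : K} (hw : w ≠ 0) : ContinuousAt (reflectionWeight a z) w := by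
  unfold reflectionWeight
  fun_prop (disch := assumption)

lemma inv_reflectionWeight_eq {a z w : K} (ha : a ≠ 0) (ha4 : a ^ 4 ≠ 1) (hz : z ≠ 0)
    (hz4 : z ^ 4 ≠ 1) (hw : w ≠ 0) (hweight : reflectionWeight a z w ≠ 0) :
    (reflectionWeight a z w)⁻¹ =
      (joukowsky (a ^ 2 * z ^ 2) - joukowsky (a ^ 2 / z ^ 2))⁻¹ *
        ((joukowsky (a ^ 2 / z ^ 2) - joukowsky w)⁻¹ -
          (joukowsky (a ^ 2 * z ^ 2) - joukowsky w)⁻¹) := by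
  have poles_ne : joukowsky (a ^ 2 * z ^ 2) - joukowsky (a ^ 2 / z ^ 2) ≠ 0 := by
    rw [joukowsky_mul_sub_joukowsky_div (pow_ne_zero 2 ha) (pow_ne_zero 2 hz)]
    exact mul_ne_zero (sq_sub_inv_sq_ne_zero ha ha4) (sq_sub_inv_sq_ne_zero hz hz4)
  rw [reflectionWeight_eq_mul ha hz hw] at hweight ⊢
  obtain ⟨hP, hQ⟩ := mul_ne_zero_iff.1 hweight
  rw [inv_sub_inv' hQ hP, sub_sub_sub_cancel_right]
  field_simp

lemma inv_reflectionWeight_matrix_eq_mul {a : K} {z w : Fin M → K} (ha : a ≠ 0)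
    (ha4 : a ^ 4 ≠ 1) (hz : ∀ i, z i ≠ 0) (hz4 : ∀ i, z i ^ 4 ≠ 1) (hw : ∀ j, w j ≠ 0)
    (hweight : ∀ i j, reflectionWeight a (z i) (w j) ≠ 0) :
    Matrix.of (fun i j => (reflectionWeight a (z i) (w j))⁻¹) =
      newtonCoeffMatrix a z w * newtonMatrix fun j => joukowsky (w j) := by
  ext i j
  have poles (m : Fin M) := mul_ne_zero_iff.1
    (reflectionWeight_eq_mul ha (hz i) (hw m) ▸ hweight i m)
  rw [Matrix.of_apply, inv_reflectionWeight_eq ha ha4 (hz i) (hz4 i) (hw j) (hweight i j),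
    inv_sub_eq_sum_resolventDividedDiff_mul_newtonMatrix (fun m => (poles m).1) j,
    inv_sub_eq_sum_resolventDividedDiff_mul_newtonMatrix (fun m => (poles m).2) j,
    ← sum_sub_distrib, mul_sum, Matrix.mul_apply]
  refine sum_congr rfl fun k _ => ?_
  rw [newtonCoeffMatrix, Matrix.of_apply]
  ring

lemma tsuchiyaKuperberg_eq_div_det_newtonMatrix (a b : K) (z : Fin M → K) {w : Fin M → K}
    (hw : ∀ j, w j ≠ 0) :
    tsuchiyaKuperberg a b z w = regularPrefactor a b z w *
      (Matrix.det (.of fun i j => (reflectionWeight a (z i) (w j))⁻¹) /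
        (newtonMatrix fun j => joukowsky (w j)).det) := by
  have denominator_eq :
      ∏ p : Fin M × Fin M with p.1 < p.2,
        (-((z p.1)⁻¹ * z p.2) + z p.1 * (z p.2)⁻¹) *
        ((z p.1)⁻¹ * (z p.2)⁻¹ - z p.1 * z p.2) *
        (-(w p.2)⁻¹ + (w p.1)⁻¹) * (w p.1 * w p.2 - 1) =
      spectralVandermonde z * (newtonMatrix fun j => joukowsky (w j)).det := by
    rw [spectralVandermonde, det_newtonMatrix, ← prod_mul_distrib]
    refine prod_congr rfl fun p _ => ?_
    rw [joukowsky_sub_joukowsky (hw p.1) (hw p.2)]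
    ring
  rw [tsuchiyaKuperberg, denominator_eq, regularPrefactor]
  ring

lemma tsuchiyaKuperberg_eq_mul_det_newtonCoeffMatrix {a : K} (b : K) {z w : Fin M → K}
    (ha : a ≠ 0) (ha4 : a ^ 4 ≠ 1) (hz : ∀ i, z i ≠ 0) (hz4 : ∀ i, z i ^ 4 ≠ 1)
    (hw : ∀ j, w j ≠ 0) (hweight : ∀ i j, reflectionWeight a (z i) (w j) ≠ 0)
    (hgeneric : ∀ i j, i ≠ j → w i ≠ w j ∧ w i * w j ≠ 1) :
    tsuchiyaKuperberg a b z w = regularPrefactor a b z w * (newtonCoeffMatrix a z w).det := by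
  have det_ne_zero : (newtonMatrix fun j => joukowsky (w j)).det ≠ 0 := by
    rw [det_newtonMatrix]
    refine prod_ne_zero_iff.2 fun p hp => ?_
    obtain ⟨hne, hne_inv⟩ := hgeneric p.1 p.2 (mem_filter.1 hp).2.ne
    exact joukowsky_sub_joukowsky_ne_zero (hw p.1) (hw p.2) hne hne_inv
  rw [tsuchiyaKuperberg_eq_div_det_newtonMatrix a b z hw,
    inv_reflectionWeight_matrix_eq_mul ha ha4 hz hz4 hw hweight, Matrix.det_mul,
    mul_div_cancel_right₀ _ det_ne_zero]

lemma newtonCoeffMatrix_one_apply {a : K} {z : Fin M → K} (ha : a ≠ 0) (hz : ∀ i, z i ≠ 0)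
    (i k : Fin M) :
    newtonCoeffMatrix a z 1 i k =
      (a ^ 2 - (a ^ 2)⁻¹)⁻¹ * a ^ 2 * (1 - z i ^ (-4:ℤ))⁻¹ * homogeneousMatrix a z i k := by
  have ha2 := pow_ne_zero 2 ha
  have hz2 := pow_ne_zero 2 (hz i)
  have residue : (z i ^ 2 - (z i ^ 2)⁻¹)⁻¹ * z i ^ 2 = (1 - z i ^ (-4:ℤ))⁻¹ := by
    have factored : z i ^ 2 - (z i ^ 2)⁻¹ = z i ^ 2 * (1 - z i ^ (-4:ℤ)) := by
      have hzi := hz i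
      simp only [zpow_neg, zpow_ofNat]
      field_simp
    rw [factored, mul_inv_rev, mul_assoc, inv_mul_cancel₀ hz2, mul_one]
  simp only [newtonCoeffMatrix, homogeneousMatrix, Matrix.of_apply, Pi.one_apply,
    resolventDividedDiff_const, joukowsky_mul_sub_joukowsky_div ha2 hz2,
    joukowsky_mul_sub_joukowsky_one ha2 hz2, joukowsky_div_sub_joukowsky_one ha2 hz2,
    inv_div, div_pow, ← pow_mul, ← residue, mul_inv]
  ring

lemma det_newtonCoeffMatrix_one {a : K} {z : Fin M → K} (ha : a ≠ 0) (hz : ∀ i, z i ≠ 0) :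
    (newtonCoeffMatrix a z 1).det =
      (∏ i, (a ^ 2 - (a ^ 2)⁻¹)⁻¹ * a ^ 2 * (1 - z i ^ (-4:ℤ))⁻¹) *
        (homogeneousMatrix a z).det := by
  rw [← Matrix.det_mul_column]
  congr 1
  ext i k
  exact newtonCoeffMatrix_one_apply ha hz i k

lemma prod_reflectionWeight_one (a : K) (z : Fin M → K) :
    ∏ i, ∏ _j : Fin M, reflectionWeight a (z i) 1 =
      ∏ i, (a ^ (2:ℤ) + a ^ (-2:ℤ) - z i ^ (-2:ℤ) - z i ^ (2:ℤ)) ^ (2 * M) := by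
  simp only [reflectionWeight, inv_one, mul_one, ← sq, prod_const, card_univ, Fintype.card_fin,
    ← pow_mul]

lemma regularPrefactor_one (a b : K) (z : Fin M → K) :
    regularPrefactor a b z 1 =
      (a ^ 2 - (a ^ 2)⁻¹) ^ M * (b - b⁻¹) ^ M *
        (∏ i, (a ^ (2:ℤ) * z i ^ (2:ℤ) - a ^ (-2:ℤ) * z i ^ (-2:ℤ))) *
        ((∏ i, (a ^ (2:ℤ) + a ^ (-2:ℤ) - z i ^ (-2:ℤ) - z i ^ (2:ℤ)) ^ (2 * M)) /
          spectralVandermonde z) := by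
  have sq_sub_zpow : a ^ (2:ℤ) - a ^ (-2:ℤ) = a ^ 2 - (a ^ 2)⁻¹ := by
    simp only [zpow_neg, zpow_ofNat]
  simp only [regularPrefactor, Pi.one_apply]
  rw [prod_reflectionWeight_one, sq_sub_zpow]
  simp only [prod_mul_distrib, prod_const, card_univ, Fintype.card_fin, one_pow, inv_one, mul_one,
    ← mul_assoc]

lemma regularPrefactor_one_mul_det_newtonCoeffMatrix_one {a : K} (b : K) {z : Fin M → K}
    (ha : a ≠ 0) (ha4 : a ^ 4 ≠ 1) (hz : ∀ i, z i ≠ 0) :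
    regularPrefactor a b z 1 * (newtonCoeffMatrix a z 1).det =
      homogeneousTsuchiyaKuperberg a b z := by
  have cancel : (a ^ 2 - (a ^ 2)⁻¹) ^ M * (a ^ 2 - (a ^ 2)⁻¹)⁻¹ ^ M = 1 := by
    rw [← mul_pow, mul_inv_cancel₀ (sq_sub_inv_sq_ne_zero ha ha4), one_pow]
  rw [regularPrefactor_one, det_newtonCoeffMatrix_one ha hz]
  set W := ∏ i, (a ^ (2:ℤ) + a ^ (-2:ℤ) - z i ^ (-2:ℤ) - z i ^ (2:ℤ)) ^ (2 * M) with hW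
  set Z := ∏ i, (a ^ (2:ℤ) * z i ^ (2:ℤ) - a ^ (-2:ℤ) * z i ^ (-2:ℤ)) with hZ
  set D := ∏ i, (1 - z i ^ (-4:ℤ))⁻¹ with hD
  have homogeneous_eq : homogeneousTsuchiyaKuperberg a b z =
      (a ^ 2) ^ M * (b - b⁻¹) ^ M * (Z * D) * (W / spectralVandermonde z) *
        (homogeneousMatrix a z).det := by
    simp only [homogeneousTsuchiyaKuperberg, div_eq_mul_inv, prod_mul_distrib, pow_mul a 2 M,
      hW, hZ, hD]
  rw [homogeneous_eq, prod_mul_distrib, prod_const, card_univ, Fintype.card_fin, mul_pow]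
  linear_combination ((a ^ 2) ^ M * (b - b⁻¹) ^ M * (Z * D) * (W / spectralVandermonde z) *
    (homogeneousMatrix a z).det) * cancel

section Topology

open Filter Topology

variable [TopologicalSpace K] [IsTopologicalDivisionRing K]

lemma continuousAt_regularPrefactor_one (a b : K) (z : Fin M → K) :
    ContinuousAt (regularPrefactor a b z) 1 := by
  have coord (j : Fin M) : ContinuousAt (fun w : Fin M → K => w j) 1 :=
    (continuous_apply j).continuousAt
  have weight (i j : Fin M) :
      ContinuousAt (fun w : Fin M → K => reflectionWeight a (z i) (w j)) 1 :=
    ContinuousAt.comp (f := fun w : Fin M → K => w j)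
      (continuousAt_reflectionWeight a (z i) one_ne_zero) (coord j)
  refine ContinuousAt.mul (.mul (.mul continuousAt_const ?_) ?_) (.div_const ?_ _)
  · exact tendsto_finsetProd _ fun i _ => (coord i).pow M
  · exact tendsto_finsetProd _ fun i _ =>
      (((coord i).inv₀ one_ne_zero).const_mul b |>.sub_const _).mul_const _
  · exact tendsto_finsetProd _ fun i _ => tendsto_finsetProd _ fun j _ => weight i j

lemma continuousAt_newtonCoeffMatrix_one {a : K} {z : Fin M → K} (ha : a ≠ 0)
    (hz : ∀ i, z i ≠ 0) (haz : ∀ i, (a ^ 2 - z i ^ 2) * (1 - a ^ 2 * z i ^ 2) ≠ 0) :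
    ContinuousAt (newtonCoeffMatrix a z) 1 := by
  have nodes : ContinuousAt (fun (w : Fin M → K) j => joukowsky (w j)) 1 :=
    continuousAt_pi.2 fun j => ContinuousAt.comp (f := fun w : Fin M → K => w j)
      (continuousAt_joukowsky one_ne_zero) (continuous_apply j).continuousAt
  refine continuousAt_pi.2 fun i => continuousAt_pi.2 fun k => continuousAt_const.mul ?_
  obtain ⟨hP, hQ⟩ := mul_ne_zero_iff.1 (reflectionWeight_eq_mul ha (hz i) one_ne_zero ▸
    reflectionWeight_one_ne_zero ha (hz i) (haz i))
  exact ((continuousAt_resolventDividedDiff fun _ _ => hQ).comp nodes).sub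
    ((continuousAt_resolventDividedDiff fun _ _ => hP).comp nodes)

lemma eventually_ne_zero_and_reflectionWeight_ne_zero [T1Space K] {a : K} {z : Fin M → K}
    (ha : a ≠ 0) (hz : ∀ i, z i ≠ 0)
    (haz : ∀ i, (a ^ 2 - z i ^ 2) * (1 - a ^ 2 * z i ^ 2) ≠ 0) :
    ∀ᶠ w in 𝓝 (1 : Fin M → K),
      (∀ j, w j ≠ 0) ∧ ∀ i j, reflectionWeight a (z i) (w j) ≠ 0 := by
  have coord (j : Fin M) : Tendsto (fun w : Fin M → K => w j) (𝓝 1) (𝓝 1) :=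
    (continuous_apply j).tendsto _
  simp only [eventually_and, eventually_all]
  exact ⟨fun j => (coord j).eventually_ne one_ne_zero, fun i j =>
    ((continuousAt_reflectionWeight a (z i) one_ne_zero).tendsto.comp (coord j)).eventually_ne
      (reflectionWeight_one_ne_zero ha (hz i) (haz i))⟩

theorem homogeneous_limit_determinant_general [T1Space K] (a b : K) (ha : a ≠ 0) (_hb : b ≠ 0)
    (ha4 : a ^ 4 ≠ 1) (z : Fin M → K) (hz : ∀ i, z i ≠ 0) (hz4 : ∀ i, z i ^ 4 ≠ 1)
    (_hzz : ∀ i j, i ≠ j → z i ^ 2 ≠ z j ^ 2)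
    (_hzz1 : ∀ i j, i ≠ j → z i ^ 2 * z j ^ 2 ≠ 1)
    (haz : ∀ i, (a ^ 2 - z i ^ 2) * (1 - a ^ 2 * z i ^ 2) ≠ 0) :
    Tendsto (tsuchiyaKuperberg a b z)
      (𝓝[{w | ∀ i j, i ≠ j → w i ≠ w j ∧ w i * w j ≠ 1}] 1)
      (𝓝 (homogeneousTsuchiyaKuperberg a b z)) := by
  have regularized_tendsto :=
    (continuousAt_regularPrefactor_one a b z).tendsto.mul
      ((continuous_id.matrix_det.tendsto _).comp (continuousAt_newtonCoeffMatrix_one ha hz haz))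
  rw [id, regularPrefactor_one_mul_det_newtonCoeffMatrix_one b ha ha4 hz] at regularized_tendsto
  refine (regularized_tendsto.mono_left nhdsWithin_le_nhds).congr' ?_
  filter_upwards [nhdsWithin_le_nhds (eventually_ne_zero_and_reflectionWeight_ne_zero ha hz haz),
    self_mem_nhdsWithin] with w ⟨hw, hweight⟩ hgeneric
  exact (tsuchiyaKuperberg_eq_mul_det_newtonCoeffMatrix b ha ha4 hz hz4 hw hweight hgeneric).symm

end Topology

end DomainWall

/-- Theorem 6.3: the homogeneous limit of the Tsuchiya-Kuperberg determinant formula for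
the domain wall boundary partition function of the `U_q(sl_2)` six-vertex model with
reflecting end.  The limit `(w_1,…,w_M) → (1,…,1)` is taken along tuples with the `w_i`
pairwise distinct and `w_i w_j ≠ 1` for `i ≠ j`. -/
theorem homogeneous_limit_determinant (M : ℕ) (a b : ℂ)
    (ha : a ≠ 0) (hb : b ≠ 0) (ha4 : a ^ 4 ≠ 1)
    (z : Fin M → ℂ) (hz : ∀ i, z i ≠ 0)
    (hz4 : ∀ i, z i ^ 4 ≠ 1)
    (hzz : ∀ i j, i ≠ j → z i ^ 2 ≠ z j ^ 2)
    (hzz1 : ∀ i j, i ≠ j → z i ^ 2 * z j ^ 2 ≠ 1)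
    (haz : ∀ i, (a ^ 2 - z i ^ 2) * (1 - a ^ 2 * z i ^ 2) ≠ 0) :
    Filter.Tendsto
      (fun w : Fin M → ℂ =>
        (a ^ (2:ℤ) - a ^ (-2:ℤ)) ^ M * (∏ i, w i ^ M) *
        (∏ i, (b * (w i)⁻¹ - b⁻¹) *
          (a ^ (2:ℤ) * z i ^ (2:ℤ) - a ^ (-2:ℤ) * z i ^ (-2:ℤ))) *
        ((∏ i, ∏ j,
          (a ^ (2:ℤ) + a ^ (-2:ℤ) - z i ^ (-2:ℤ) * w j - z i ^ (2:ℤ) * (w j)⁻¹) *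
          (a ^ (2:ℤ) + a ^ (-2:ℤ) - z i ^ (-2:ℤ) * (w j)⁻¹ - z i ^ (2:ℤ) * w j)) /
         (∏ p ∈ Finset.univ.filter (fun p : Fin M × Fin M => p.1 < p.2),
          (-((z p.1)⁻¹ * z p.2) + z p.1 * (z p.2)⁻¹) *
          ((z p.1)⁻¹ * (z p.2)⁻¹ - z p.1 * z p.2) *
          (-(w p.2)⁻¹ + (w p.1)⁻¹) * (w p.1 * w p.2 - 1))) *
        Matrix.det (Matrix.of fun i j : Fin M =>
          ((a ^ (2:ℤ) + a ^ (-2:ℤ) - z i ^ (-2:ℤ) * w j - z i ^ (2:ℤ) * (w j)⁻¹) *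
           (a ^ (2:ℤ) + a ^ (-2:ℤ) - z i ^ (-2:ℤ) * (w j)⁻¹ - z i ^ (2:ℤ) * w j))⁻¹))
      (nhdsWithin (fun _ => (1 : ℂ))
        {w : Fin M → ℂ | ∀ i j, i ≠ j → w i ≠ w j ∧ w i * w j ≠ 1})
      (nhds
        (a ^ (2 * M) * (b - b⁻¹) ^ M *
          (∏ i, (a ^ (2:ℤ) * z i ^ (2:ℤ) - a ^ (-2:ℤ) * z i ^ (-2:ℤ)) /
            (1 - z i ^ (-4:ℤ))) *
          ((∏ i, (a ^ (2:ℤ) + a ^ (-2:ℤ) - z i ^ (-2:ℤ) - z i ^ (2:ℤ)) ^ (2 * M)) /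
           (∏ p ∈ Finset.univ.filter (fun p : Fin M × Fin M => p.1 < p.2),
            (-((z p.1)⁻¹ * z p.2) + z p.1 * (z p.2)⁻¹) *
            ((z p.1)⁻¹ * (z p.2)⁻¹ - z p.1 * z p.2))) *
          Matrix.det (Matrix.of fun i j : Fin M =>
            (a ^ 2 * z i ^ 2) ^ (j : ℕ) / (a ^ 2 - z i ^ 2) ^ (2 * ((j : ℕ) + 1))
              - (a ^ 2 * z i ^ 2) ^ (j : ℕ) /
                (1 - a ^ 2 * z i ^ 2) ^ (2 * ((j : ℕ) + 1))))) :=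
  homogeneous_limit_determinant_general a b ha hb ha4 z hz hz4 hzz hzz1 haz
end

section
/- For M ≥ 1 and 0 ≤ N ≤ M, the following homogeneous Cauchy-type identity holds: Σ_{x ⊔ x̄ = {1,2,…,M}} F̄_{M,M−N}(z_1,…,z_{M−N}|1,…,1|x̄_1,…,x̄_{M−N}) · F_{M,N}(z_{M−N+1},…,z_M|1,…,1|x_1,…,x_N) = a^{2M}(b−b⁻¹)^M ∏_{i=1}^M [(a²z_i²−a⁻²z_i⁻²)/(1−z_i⁻⁴)] × [∏_{i=1}^M (a²+a⁻²−z_i⁻²−z_i²)^{2M}] / [∏_{1≤i<j≤M}(−z_i⁻¹z_j+z_i z_j⁻¹)(z_i⁻¹z_j⁻¹−z_i z_j)] × det_{M×M}( (a²z_i²)^{j−1}/(a²−z_i²)^{2j} − (a²z_i²)^{j−1}/(1−a²z_i²)^{2j} ), where the sum is over all pairs of increasing sequences x = {x_1 < ⋯ < x_N} and x̄ = {x̄_1 < ⋯ < x̄_{M−N}} of integers in {1,…,M} whose disjoint union is {1,2,…,M}. -/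
open Finset

/-! Put `Δ = a² + a⁻²`, and let `p = a y⁻¹ - a⁻¹ y`, `q = a y - a⁻¹ y⁻¹` be the two vertex weights
of a spectral parameter `y` at `w = 1`. They lie on the conic `p² + q² + Δ p q = (a² - a⁻²)²`, so
`u = p / q` is the multiplicative momentum of a magnon of energy
`u + u⁻¹ + Δ = (a² - a⁻²)² / (p q)`, and up to factors that depend on one spectral parameter only,
`F` and `F̄` become Bethe wave functions on a half-line with a reflecting end.

Regard the magnons of `F` and of `F̄` as having two colours, where magnons of different colours do
not interact. Arrangements of all `M` magnons are shuffles of those of the two colours, so the sum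
over complementary positions is the wave function of the two-coloured system with every site
occupied.

That wave function does not depend on the colouring. Remove the last magnon `k`: its interaction
factors, antisymmetrised under `u ↦ u⁻¹`, are a combination of the modes
`(u ^ (j + 1) - u⁻¹ ^ (j + 1)) (u + u⁻¹ + Δ) ^ j` whose coefficients are the same for all `k`.
Indeed they are read off the coefficient of `ω` of one element of `K[X][ω] / (ω² + Δ ω + 1 - X)`,
and changing the colour of the removed magnon amounts to the conjugation `ω ↦ -Δ - ω` and a sign,
which preserve that coefficient. Expanding the determinant of modes along its last column, only
the top coefficient survives, and induction gives a determinant over a Vandermonde product.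
-/

namespace OpenChain

section MomentumRing

open Polynomial QuadraticAlgebra

variable {K : Type*} [Field K]

/-- The sign `±1` encoded by a boolean, with the convention of `eps`. -/
def boolSign (e : Bool) : ℤ := if e then 1 else -1

@[simp] theorem boolSign_true : boolSign true = 1 := rfl

@[simp] theorem boolSign_false : boolSign false = -1 := rfl

/-- The energy of a magnon with multiplicative momentum `u`, for the anisotropy parameter `Δ`. -/
def energy (Δ u : K) : K := u + u⁻¹ + Δ

theorem energy_zpow_boolSign (Δ u : K) (e : Bool) : energy Δ (u ^ boolSign e) = energy Δ u := by
  cases e <;> simp [energy, add_comm u]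

theorem energy_mul_self (Δ : K) {u : K} (hu : u ≠ 0) :
    energy Δ u * u = u ^ 2 + Δ * u + 1 := by
  unfold energy
  field_simp
  ring

/-- The numerator, as a function of the momentum `y`, of the scattering of a magnon of colour `h'`
off a magnon of energy `E` and colour `h`. -/
def interaction (Δ E : K) (h h' : Bool) (y : K) : K :=
  y ^ 2 + Δ * y + 1 - E * (if h = h' then -Δ - y else y)

/-- The ring `K[X][ω]` with `ω² + Δω + 1 = X`. It is the polynomial ring `K[ω]`, in which each
polynomial in a momentum `ω` is expanded over the invariants of the reflection `ω ↦ -Δ - ω`. -/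
abbrev MomentumRing (Δ : K) := QuadraticAlgebra K[X] (X - 1) (-C Δ)

/-- The evaluation of an element of the momentum ring at the momentum `y`. -/
noncomputable def evalMomentum (Δ y : K) : MomentumRing Δ →+* K where
  toFun q := q.re.eval (y ^ 2 + Δ * y + 1) + y * q.im.eval (y ^ 2 + Δ * y + 1)
  map_one' := by simp
  map_zero' := by simp
  map_add' p q := by
    simp only [re_add, im_add, eval_add]
    ring
  map_mul' p q := by
    simp only [re_mul, im_mul, eval_add, eval_sub, eval_mul, eval_neg, eval_X, eval_C, eval_one]
    ring

theorem evalMomentum_mk (Δ y : K) (p q : K[X]) :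
    evalMomentum Δ y ⟨p, q⟩ = p.eval (y ^ 2 + Δ * y + 1) + y * q.eval (y ^ 2 + Δ * y + 1) :=
  rfl

/-- The element `X - E y` or `X - E (-Δ - y)` of the momentum ring, of which `interaction` is the
evaluation. -/
noncomputable def interactionElem (Δ E : K) (h h' : Bool) : MomentumRing Δ :=
  if h = h' then ⟨X + C (Δ * E), C E⟩ else ⟨X, -C E⟩

theorem evalMomentum_interactionElem (Δ E y : K) (h h' : Bool) :
    evalMomentum Δ y (interactionElem Δ E h h') = interaction Δ E h h' y := by
  rw [interactionElem, interaction]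
  split_ifs <;> simp only [evalMomentum_mk, eval_add, eval_neg, eval_X, eval_C] <;> ring

theorem star_interactionElem (Δ E : K) (h h' : Bool) :
    star (interactionElem Δ E h h') = interactionElem Δ E h (!h') := by
  cases h <;> cases h' <;> ext1 <;> simp [interactionElem]

variable {ι : Type*}

theorem isMonicOfDegree_re_mul_interactionElem {Δ : K} {q : MomentumRing Δ} {n : ℕ}
    (hre : q.re.IsMonicOfDegree n) (him : q.im.degree < n) (E : K) (h h' : Bool) :
    (q * interactionElem Δ E h h').re.IsMonicOfDegree (n + 1) ∧
      (q * interactionElem Δ E h h').im.degree < (n + 1 : ℕ) := by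
  obtain ⟨r, s, heq⟩ : ∃ r s : K, interactionElem Δ E h h' = ⟨X + C r, C s⟩ := by
    by_cases hh : h = h'
    · exact ⟨Δ * E, E, by simp [interactionElem, hh]⟩
    · exact ⟨0, -E, by simp [interactionElem, hh]⟩
  have hmul_le {p : K[X]} (hp : p.degree ≤ 1) : (q.im * p).degree ≤ n := by
    rw [degree_mul]
    exact (add_le_add_right hp _).trans (Nat.WithBot.add_one_le_of_lt him)
  have hre_mul : (q * interactionElem Δ E h h').re =
      q.re * (X + C r) + q.im * (C s * (X - 1)) := by
    rw [heq, re_mul]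
    ring
  have him_mul : (q * interactionElem Δ E h h').im =
      s • q.re + q.im * (X + C (r - Δ * s)) := by
    rw [heq, im_mul, smul_eq_C_mul, map_sub, map_mul]
    ring
  have hre_deg : (s • q.re).degree ≤ n :=
    (degree_smul_le _ _).trans (natDegree_le_iff_degree_le.1 hre.natDegree_eq.le)
  rw [hre_mul, him_mul]
  refine ⟨(hre.mul (isMonicOfDegree_X_add_one r)).add_right ?_, ?_⟩
  · exact Nat.lt_succ_of_le (natDegree_le_of_degree_le (hmul_le (by compute_degree)))
  · exact (degree_add_le_of_degree_le hre_deg (hmul_le (by compute_degree))).trans_lt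
      (by exact_mod_cast n.lt_succ_self)

theorem isMonicOfDegree_re_prod_interactionElem (Δ : K) (E : ι → K) (g : ι → Bool)
    (h : Bool) (s : Finset ι) :
    (∏ i ∈ s, interactionElem Δ (E i) (g i) h).re.IsMonicOfDegree #s ∧
      (∏ i ∈ s, interactionElem Δ (E i) (g i) h).im.degree < #s := by
  classical
  induction s using Finset.induction_on with
  | empty => simp
  | insert i s hi ih =>
    rw [prod_insert hi, card_insert_of_notMem hi, mul_comm]
    exact isMonicOfDegree_re_mul_interactionElem ih.1 ih.2 _ _ _

variable [Fintype ι]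

/-- The element of the momentum ring attached to a magnon of colour `h` entering a system of
magnons with energies `E` and colours `g`. The factor `B ω + β h` comes from the boundary. -/
noncomputable def exchangeElem (Δ B : K) (β : Bool → K) (E : ι → K) (g : ι → Bool) (h : Bool) :
    MomentumRing Δ :=
  ⟨C (β h), C B⟩ * ∏ i, interactionElem Δ (E i) (g i) h

theorem star_exchangeElem {Δ B : K} {β : Bool → K} (hβ : β true + β false = Δ * B)
    (E : ι → K) (g : ι → Bool) (h : Bool) :
    star (exchangeElem Δ B β E g h) = -exchangeElem Δ B β E g (!h) := by
  have hboundary : star (⟨C (β h), C B⟩ : MomentumRing Δ) = -⟨C (β !h), C B⟩ := by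
    have hβ' : β h = Δ * B - β !h := by cases h <;> simp [← hβ]
    ext1 <;> simp [hβ', sub_eq_add_neg]
  rw [exchangeElem, star_mul', star_prod, hboundary, exchangeElem, neg_mul]
  simp only [star_interactionElem]

theorem im_exchangeElem_eq {Δ B : K} {β : Bool → K} (hβ : β true + β false = Δ * B)
    (E : ι → K) (g : ι → Bool) (h h' : Bool) :
    (exchangeElem Δ B β E g h).im = (exchangeElem Δ B β E g h').im := by
  have him (h : Bool) : (exchangeElem Δ B β E g h).im = (exchangeElem Δ B β E g !h).im := by
    simpa using (congrArg im (star_exchangeElem hβ E g !h)).symm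
  cases h <;> cases h' <;> first | rfl | exact him _

theorem natDegree_im_exchangeElem_le (Δ B : K) (β : Bool → K) (E : ι → K) (g : ι → Bool)
    (h : Bool) : (exchangeElem Δ B β E g h).im.natDegree ≤ Fintype.card ι := by
  obtain ⟨hre, him⟩ := isMonicOfDegree_re_prod_interactionElem Δ E g h univ
  rw [card_univ] at hre him
  have him_mul : (exchangeElem Δ B β E g h).im =
      B • (∏ i, interactionElem Δ (E i) (g i) h).re +
        (β h - Δ * B) • (∏ i, interactionElem Δ (E i) (g i) h).im := by
    simp only [exchangeElem, im_mul, smul_eq_C_mul, map_sub, map_mul]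
    ring
  rw [him_mul]
  exact natDegree_add_le_of_degree_le ((natDegree_smul_le _ _).trans hre.natDegree_eq.le)
    ((natDegree_smul_le _ _).trans (natDegree_le_of_degree_le him.le))

theorem coeff_im_exchangeElem (Δ B : K) (β : Bool → K) (E : ι → K) (g : ι → Bool) (h : Bool) :
    (exchangeElem Δ B β E g h).im.coeff (Fintype.card ι) = B := by
  obtain ⟨hre, him⟩ := isMonicOfDegree_re_prod_interactionElem Δ E g h univ
  rw [card_univ] at hre him
  have hre1 := hre.monic
  rw [Monic, leadingCoeff, hre.natDegree_eq] at hre1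
  simp [exchangeElem, hre1, coeff_eq_zero_of_degree_lt him, mul_assoc]

theorem im_mul_interactionElem_eval {Δ E y : K} (hy : y ^ 2 + Δ * y + 1 = E * y)
    (q : MomentumRing Δ) (h : Bool) :
    (q * interactionElem Δ E h h).im.eval (E * y) = E * evalMomentum Δ y q := by
  simp only [interactionElem, if_true, evalMomentum, RingHom.coe_mk, MonoidHom.coe_mk,
    OneHom.coe_mk, hy, im_mul, eval_add, eval_mul, eval_neg, eval_X, eval_C]
  ring

theorem eval_im_exchangeElem {n : ℕ} {Δ B : K} {β : Bool → K} (hβ : β true + β false = Δ * B)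
    (E : Fin (n + 1) → K) (g : Fin (n + 1) → Bool) (h : Bool) (k : Fin (n + 1)) {y : K}
    (hy : y ^ 2 + Δ * y + 1 = E k * y) :
    (exchangeElem Δ B β E g h).im.eval (E k * y) =
      E k * ((B * y + β (g k)) *
        ∏ i : Fin n, interaction Δ (E (k.succAbove i)) (g (k.succAbove i)) (g k) y) := by
  have hboundary : evalMomentum Δ y ⟨C (β (g k)), C B⟩ = B * y + β (g k) := by
    simp only [evalMomentum_mk, eval_C]
    ring
  rw [im_exchangeElem_eq hβ E g h (g k), exchangeElem, Fin.prod_univ_succAbove _ k,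
    mul_left_comm, mul_comm (interactionElem _ _ _ _), im_mul_interactionElem_eval hy, map_mul,
    map_prod, hboundary]
  simp only [evalMomentum_interactionElem]

/-- The antisymmetrised power `u ^ (j + 1) - u⁻¹ ^ (j + 1)`, weighted by a power of the energy: the
entry in column `j` of the determinant that evaluates the wave function. -/
def mode (Δ : K) (j : ℕ) (u : K) : K := (u ^ (j + 1) - u⁻¹ ^ (j + 1)) * energy Δ u ^ j

theorem sum_boolSign_mul_eval (Δ : K) (T : K[X]) {N : ℕ} (hT : T.natDegree ≤ N) (u : K) :
    ∑ e, (boolSign e : K) * T.eval (energy Δ u * u ^ boolSign e) =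
      energy Δ u * ∑ j : Fin N, T.coeff (j + 1) * mode Δ j u := by
  simp only [eval_eq_sum_range' (Nat.lt_succ_of_le hT), Finset.sum_range_succ' _ N,
    Fintype.sum_bool, boolSign_true, boolSign_false, Finset.sum_range, mul_sum, mode]
  simp only [Int.cast_one, Int.cast_neg, zpow_one, zpow_neg_one, pow_zero, one_mul, neg_one_mul,
    ← sub_eq_add_neg, add_sub_add_right_eq_sub, ← sum_sub_distrib]
  exact sum_congr rfl fun j _ => by ring

/-- The coefficients of the modes depend neither on the magnon `k` nor on its colour, which is what
allows a determinant to be formed. -/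
theorem sum_boolSign_mul_interaction {n : ℕ} {Δ B : K} {β : Bool → K}
    (hβ : β true + β false = Δ * B) {u : Fin (n + 1) → K} (g : Fin (n + 1) → Bool)
    (k : Fin (n + 1)) (hu : u k ≠ 0) (henergy : energy Δ (u k) ≠ 0) :
    ∑ e, (boolSign e : K) * ((B * u k ^ boolSign e + β (g k)) *
        ∏ i : Fin n, interaction Δ (energy Δ (u (k.succAbove i))) (g (k.succAbove i)) (g k)
          (u k ^ boolSign e)) =
      ∑ j : Fin (n + 1),
        (exchangeElem Δ B β (fun i => energy Δ (u i)) g true).im.coeff (j + 1) *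
          mode Δ j (u k) := by
  refine mul_left_cancel₀ henergy ?_
  rw [← sum_boolSign_mul_eval _ _ (by simpa using natDegree_im_exchangeElem_le Δ B β _ g true),
    mul_sum]
  refine sum_congr rfl fun e _ => ?_
  have hy : (u k ^ boolSign e) ^ 2 + Δ * u k ^ boolSign e + 1 =
      energy Δ (u k) * u k ^ boolSign e := by
    rw [← energy_mul_self _ (zpow_ne_zero _ hu), energy_zpow_boolSign]
  rw [eval_im_exchangeElem hβ (fun i => energy Δ (u i)) g true k hy]
  ring

end MomentumRing

section LinearAlgebra

variable {R : Type*} [CommRing R] {n : ℕ}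

theorem sum_combination_mul_det_submatrix (A : Matrix (Fin (n + 1)) (Fin (n + 1)) R)
    (c : Fin (n + 1) → R) :
    ∑ k : Fin (n + 1), (-1) ^ (k + n : ℕ) * (∑ j, c j * A k j) *
        (A.submatrix k.succAbove Fin.castSucc).det = c (Fin.last n) * A.det := by
  rw [← smul_eq_mul, ← Matrix.det_updateCol_sum A (Fin.last n) c,
    Matrix.det_succ_column _ (Fin.last n)]
  refine sum_congr rfl fun k _ => ?_
  rw [Matrix.updateCol_self, Matrix.submatrix_updateCol_succAbove, Fin.succAbove_last]
  rfl

theorem det_vandermonde_succ (v : Fin (n + 1) → R) :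
    (Matrix.vandermonde v).det =
      (∏ i : Fin n, (v i.succ - v 0)) * (Matrix.vandermonde fun i : Fin n => v i.succ).det := by
  simp only [Matrix.det_vandermonde, Fin.prod_univ_succ, Fin.prod_Ioi_zero, Fin.prod_Ioi_succ]

theorem det_vandermonde_succAbove (v : Fin (n + 1) → R) (k : Fin (n + 1)) :
    (Matrix.vandermonde v).det = (-1) ^ (k + n : ℕ) * (∏ i, (v k - v (k.succAbove i))) *
      (Matrix.vandermonde fun i => v (k.succAbove i)).det := by
  have hcycle : (Matrix.vandermonde fun i => v (k.cycleRange.symm i)).det =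
      (-1) ^ (k : ℕ) * (Matrix.vandermonde v).det :=
    (Matrix.det_permute k.cycleRange.symm (Matrix.vandermonde v)).trans
      (by simp [Fin.sign_cycleRange])
  have hneg : ∏ i, (v (k.succAbove i) - v k) = (-1) ^ n * ∏ i, (v k - v (k.succAbove i)) := by
    simpa using prod_neg (s := univ) fun i => v k - v (k.succAbove i)
  rw [det_vandermonde_succ] at hcycle
  simp only [Fin.cycleRange_symm_zero, Fin.cycleRange_symm_succ, hneg] at hcycle
  rw [pow_add, mul_assoc, mul_assoc, ← mul_assoc (_ ^ n), hcycle, ← mul_assoc, ← mul_pow,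
    neg_mul_neg, one_mul, one_pow, one_mul]

end LinearAlgebra

section BetheWaveFunction

variable {K : Type*} [Field K] {n : ℕ}

/-- The scattering factor of a magnon of momentum `y` off a magnon of momentum `x` and off its
reflection of momentum `x⁻¹`. -/
def scattering (Δ x y : K) : K :=
  (y ^ 2 + Δ * y + 1 + energy Δ x * (y + Δ)) / (y ^ 2 + Δ * y + 1 - energy Δ x * y)

/-- The contribution of a pair of magnons to the Bethe amplitude: those of equal colours scatter,
those of different colours do not interact. -/
def pairAmplitude (Δ : K) (h h' : Bool) (x y : K) : K :=
  if h = h' then scattering Δ x y else 1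

theorem pairAmplitude_zpow_boolSign (Δ : K) (h h' : Bool) (x y : K) (e : Bool) :
    pairAmplitude Δ h h' (x ^ boolSign e) y = pairAmplitude Δ h h' x y := by
  simp only [pairAmplitude, scattering, energy_zpow_boolSign]

theorem pairAmplitude_mul_sub {Δ x y : K} (hy : y ≠ 0) (hxy : energy Δ y ≠ energy Δ x)
    (h h' : Bool) :
    pairAmplitude Δ h h' x y * ((energy Δ y - energy Δ x) * y) =
      interaction Δ (energy Δ x) h h' y := by
  have hne : energy Δ y * y - energy Δ x * y ≠ 0 := by
    rw [← sub_mul]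
    exact mul_ne_zero (sub_ne_zero.2 hxy) hy
  rw [pairAmplitude, interaction, scattering, ← energy_mul_self Δ hy, sub_mul]
  split_ifs
  · rw [div_mul_cancel₀ _ hne]
    ring
  · ring

/-- The Bethe amplitude of magnons with colours `h` and momenta `w`, listed in the order of their
positions `x`. -/
def amplitude (Δ : K) (h : Fin n → Bool) (w : Fin n → K) (x : Fin n → ℕ) : K :=
  (∏ p : Fin n × Fin n with p.1 < p.2, pairAmplitude Δ (h p.1) (h p.2) (w p.1) (w p.2)) *
    ∏ i, w i ^ x i

theorem amplitude_succ (Δ : K) (h : Fin (n + 1) → Bool) (w : Fin (n + 1) → K)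
    (x : Fin (n + 1) → ℕ) :
    amplitude Δ h w x =
      (∏ i : Fin n, pairAmplitude Δ (h i.castSucc) (h (Fin.last n)) (w i.castSucc)
          (w (Fin.last n))) * w (Fin.last n) ^ x (Fin.last n) *
        amplitude Δ (fun i => h i.castSucc) (fun i => w i.castSucc) (fun i => x i.castSucc) := by
  simp only [amplitude, prod_filter, ← univ_product_univ, prod_product, Fin.prod_univ_castSucc,
    prod_mul_distrib]
  have hlast (i : Fin n) : ¬Fin.last n < i.castSucc := (Fin.le_last _).not_gt
  simp only [Fin.castSucc_lt_castSucc_iff, hlast, Fin.castSucc_lt_last, lt_irrefl, if_true,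
    if_false, prod_const_one, mul_one]
  ring

/-- The Bethe wave function at positions `x` of magnons with colours `g` and momenta `u`, summed
over their orderings `π` and over the reflections `u ↦ u⁻¹` recorded by `τ`. The factors
`B u + β` come from the reflecting end. -/
def betheSum (Δ B : K) (β : Bool → K) (g : Fin n → Bool) (u : Fin n → K) (x : Fin n → ℕ) : K :=
  ∑ π : Equiv.Perm (Fin n), ∑ τ : Fin n → Bool,
    (∏ i, (boolSign (τ i) : K) * (B * u i ^ boolSign (τ i) + β (g i))) *
      amplitude Δ (fun i => g (π i)) (fun i => u (π i) ^ boolSign (τ (π i))) x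

/-- The arrangement that puts the magnon `k` last and the others in the order `π`. -/
def placeLast (k : Fin (n + 1)) (π : Equiv.Perm (Fin n)) : Equiv.Perm (Fin (n + 1)) :=
  (finSuccEquivLast.trans (Equiv.optionCongr π)).trans (finSuccEquiv' k).symm

@[simp] theorem placeLast_castSucc (k : Fin (n + 1)) (π : Equiv.Perm (Fin n)) (i : Fin n) :
    placeLast k π i.castSucc = k.succAbove (π i) := by
  simp [placeLast]

@[simp] theorem placeLast_last (k : Fin (n + 1)) (π : Equiv.Perm (Fin n)) :
    placeLast k π (Fin.last n) = k := by
  simp [placeLast]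

theorem bijective_placeLast :
    Function.Bijective fun p : Fin (n + 1) × Equiv.Perm (Fin n) => placeLast p.1 p.2 := by
  refine (Fintype.bijective_iff_injective_and_card _).2
    ⟨?_, by simp [Fintype.card_perm, Nat.factorial_succ]⟩
  rintro ⟨k, π⟩ ⟨k', π'⟩ heq
  obtain rfl : k = k' := by simpa using DFunLike.congr_fun heq (Fin.last n)
  refine Prod.ext rfl (Equiv.ext fun i => ?_)
  simpa using DFunLike.congr_fun heq i.castSucc

theorem betheSum_succ (Δ B : K) (β : Bool → K) (g : Fin (n + 1) → Bool) (u : Fin (n + 1) → K)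
    (x : Fin (n + 1) → ℕ) :
    betheSum Δ B β g u x = ∑ k : Fin (n + 1),
      (∑ e, (boolSign e : K) * ((B * u k ^ boolSign e + β (g k)) *
        (∏ i : Fin n, pairAmplitude Δ (g (k.succAbove i)) (g k) (u (k.succAbove i))
          (u k ^ boolSign e)) * (u k ^ boolSign e) ^ x (Fin.last n))) *
      betheSum Δ B β (fun i => g (k.succAbove i)) (fun i => u (k.succAbove i))
        (fun i => x i.castSucc) := by
  rw [betheSum, ← (Equiv.ofBijective _ bijective_placeLast).sum_comp, Fintype.sum_prod_type]
  refine sum_congr rfl fun k _ => ?_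
  rw [betheSum, mul_sum]
  refine sum_congr rfl fun π _ => ?_
  rw [← (Fin.insertNthEquiv (fun _ => Bool) k).sum_comp, Fintype.sum_prod_type, sum_mul_sum]
  refine sum_congr rfl fun e _ => sum_congr rfl fun τ _ => ?_
  simp only [Equiv.ofBijective_apply, amplitude_succ, placeLast_castSucc, placeLast_last,
    pairAmplitude_zpow_boolSign, Fin.insertNthEquiv_apply, Fin.insertNth_apply_same,
    Fin.insertNth_apply_succAbove, Fin.prod_univ_succAbove _ k]
  rw [Equiv.prod_comp π fun i => pairAmplitude Δ (g (k.succAbove i)) (g k) (u (k.succAbove i))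
    (u k ^ boolSign e)]
  ring

theorem sum_boolSign_mul_pairAmplitude {Δ B : K} {β : Bool → K} (hβ : β true + β false = Δ * B)
    {u : Fin (n + 1) → K} (g : Fin (n + 1) → Bool) (hu : ∀ i, u i ≠ 0)
    (henergy : ∀ i, energy Δ (u i) ≠ 0) (hinj : Function.Injective fun i => energy Δ (u i))
    (k : Fin (n + 1)) :
    (∑ e, (boolSign e : K) * ((B * u k ^ boolSign e + β (g k)) *
        (∏ i : Fin n, pairAmplitude Δ (g (k.succAbove i)) (g k) (u (k.succAbove i))
          (u k ^ boolSign e)) * (u k ^ boolSign e) ^ n)) *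
      ∏ i : Fin n, (energy Δ (u k) - energy Δ (u (k.succAbove i))) =
    ∑ j : Fin (n + 1),
      (exchangeElem Δ B β (fun i => energy Δ (u i)) g true).im.coeff (j + 1) *
        mode Δ j (u k) := by
  rw [← sum_boolSign_mul_interaction hβ g k (hu k) (henergy k), sum_mul]
  refine sum_congr rfl fun e _ => ?_
  have hinteraction : ∏ i : Fin n, interaction Δ (energy Δ (u (k.succAbove i)))
        (g (k.succAbove i)) (g k) (u k ^ boolSign e) =
      (∏ i : Fin n, pairAmplitude Δ (g (k.succAbove i)) (g k) (u (k.succAbove i))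
        (u k ^ boolSign e)) *
      ((∏ i : Fin n, (energy Δ (u k) - energy Δ (u (k.succAbove i)))) *
        (u k ^ boolSign e) ^ n) := by
    have hne (i : Fin n) : energy Δ (u k ^ boolSign e) ≠ energy Δ (u (k.succAbove i)) := by
      rw [energy_zpow_boolSign]
      exact hinj.ne (k.succAbove_ne i).symm
    rw [← Fin.prod_const, ← prod_mul_distrib, ← prod_mul_distrib]
    refine prod_congr rfl fun i _ => ?_
    rw [← pairAmplitude_mul_sub (zpow_ne_zero _ (hu k)) (hne i), energy_zpow_boolSign]
  rw [hinteraction]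
  ring

/-- Removing the last magnon expands both sides along their last column: on the left the
Vandermonde determinant cancels the scattering denominators. -/
theorem betheSum_mul_det_vandermonde {Δ B : K} {β : Bool → K} (hβ : β true + β false = Δ * B)
    (g : Fin n → Bool) {u : Fin n → K} (hu : ∀ i, u i ≠ 0) (henergy : ∀ i, energy Δ (u i) ≠ 0)
    (hinj : Function.Injective fun i => energy Δ (u i)) :
    betheSum Δ B β g u Fin.val * (Matrix.vandermonde fun i => energy Δ (u i)).det =
      B ^ n * (Matrix.of fun i j : Fin n => mode Δ j (u i)).det := by
  induction n with
  | zero => simp [betheSum, amplitude]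
  | succ n ih =>
    set c : Fin (n + 1) → K := fun j =>
      (exchangeElem Δ B β (fun i => energy Δ (u i)) g true).im.coeff (j + 1) with hc
    have hc_last : c (Fin.last n) = B := by
      simpa [hc] using coeff_im_exchangeElem Δ B β (fun i => energy Δ (u i)) g true
    rw [pow_succ, mul_assoc, ← hc_last, ← sum_combination_mul_det_submatrix, mul_sum,
      betheSum_succ, sum_mul, hc_last]
    refine sum_congr rfl fun k _ => ?_
    have hremoved := ih (fun i => g (k.succAbove i)) (fun i => hu (k.succAbove i))
      (fun i => henergy (k.succAbove i)) (hinj.comp k.succAbove_right_injective)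
    have hpeeled := sum_boolSign_mul_pairAmplitude hβ g hu henergy hinj k
    rw [det_vandermonde_succAbove _ k]
    have hminor : (Matrix.of fun i j : Fin (n + 1) => mode Δ j (u i)).submatrix k.succAbove
        Fin.castSucc = Matrix.of fun i j : Fin n => mode Δ j (u (k.succAbove i)) := rfl
    rw [hminor, mul_left_comm (B ^ n), ← hremoved]
    simp only [Matrix.of_apply, ← hpeeled, Fin.val_last, Fin.val_castSucc, hc]
    ring

end BetheWaveFunction

section Shuffles

variable {K : Type*} [Field K] {n m M : ℕ}

theorem amplitude_eq_mul_amplitude (Δ : K) (E : Fin n ⊕ Fin m ≃ Fin M)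
    (hinl : StrictMono fun i => E (.inl i)) (hinr : StrictMono fun j => E (.inr j))
    {h : Fin M → Bool} (hne : ∀ i j, h (E (.inl i)) ≠ h (E (.inr j))) (w : Fin M → K)
    (x : Fin M → ℕ) :
    amplitude Δ h w x =
      amplitude Δ (fun i => h (E (.inl i))) (fun i => w (E (.inl i))) (fun i => x (E (.inl i))) *
      amplitude Δ (fun j => h (E (.inr j))) (fun j => w (E (.inr j)))
        (fun j => x (E (.inr j))) := by
  simp only [amplitude, prod_filter, ← univ_product_univ, prod_product]
  simp only [← E.prod_comp, Fintype.prod_sum_type, hinl.lt_iff_lt, hinr.lt_iff_lt, pairAmplitude,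
    hne, (hne _ _).symm, if_false, ite_self, prod_const_one, mul_one, one_mul]
  ring

/-- The positions of the magnons of the first colour in the arrangement `π`, when `G` labels the
magnons by their colour. -/
def leftPositions (G : Fin n ⊕ Fin m ≃ Fin M) (π : Equiv.Perm (Fin M)) : Finset (Fin M) :=
  {i | (G.symm (π i)).isLeft}

theorem card_leftPositions (G : Fin n ⊕ Fin m ≃ Fin M) (π : Equiv.Perm (Fin M)) :
    #(leftPositions G π) = n := by
  have hmap : leftPositions G π =
      univ.map (Function.Embedding.inl.trans (G.trans π.symm).toEmbedding) := by
    ext i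
    rw [leftPositions, mem_filter_univ, Sum.isLeft_iff]
    simp [Equiv.symm_apply_eq, eq_comm (a := π i)]
  rw [hmap, card_map, card_fin]

/-- The arrangement with the magnons of the first colour, ordered by `p.1`, at the positions
`E ∘ inl`, and those of the second colour, ordered by `p.2`, at the positions `E ∘ inr`. -/
def shuffle (G E : Fin n ⊕ Fin m ≃ Fin M) (p : Equiv.Perm (Fin n) × Equiv.Perm (Fin m)) :
    Equiv.Perm (Fin M) :=
  E.symm.trans ((Equiv.sumCongr p.1 p.2).trans G)

theorem shuffle_apply (G E : Fin n ⊕ Fin m ≃ Fin M)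
    (p : Equiv.Perm (Fin n) × Equiv.Perm (Fin m)) (s : Fin n ⊕ Fin m) :
    shuffle G E p (E s) = G (s.map p.1 p.2) := by
  simp [shuffle]

theorem shuffle_injective (G E : Fin n ⊕ Fin m ≃ Fin M) : Function.Injective (shuffle G E) := by
  intro p q heq
  refine Equiv.Perm.sumCongrHom_injective (Equiv.ext fun s => G.injective ?_)
  simpa [shuffle_apply] using DFunLike.congr_fun heq (E s)

theorem leftPositions_shuffle (G : Fin n ⊕ Fin m ≃ Fin M) {S : Finset (Fin M)} (hS : #S = n)
    (hSc : #Sᶜ = m) (p : Equiv.Perm (Fin n) × Equiv.Perm (Fin m)) :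
    leftPositions G (shuffle G (finSumEquivOfFinset hS hSc) p) = S := by
  ext i
  obtain ⟨s, rfl⟩ := (finSumEquivOfFinset hS hSc).surjective i
  rw [leftPositions, mem_filter_univ, shuffle_apply, Equiv.symm_apply_apply, Sum.isLeft_map]
  rcases s with i | j
  · simp
  · simpa using mem_compl.1 (Sᶜ.orderEmbOfFin_mem hSc j)

theorem exists_shuffle_eq (G : Fin n ⊕ Fin m ≃ Fin M) {S : Finset (Fin M)} (hS : #S = n)
    (hSc : #Sᶜ = m) {π : Equiv.Perm (Fin M)} (hπ : leftPositions G π = S) :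
    ∃ p, shuffle G (finSumEquivOfFinset hS hSc) p = π := by
  set E := finSumEquivOfFinset hS hSc
  have hmaps : Set.MapsTo (E.trans (π.trans G.symm)) (Set.range Sum.inl) (Set.range Sum.inl) := by
    rintro _ ⟨i, rfl⟩
    have hi : E (.inl i) ∈ leftPositions G π := hπ ▸ S.orderEmbOfFin_mem hS i
    rw [leftPositions, mem_filter_univ, Sum.isLeft_iff] at hi
    exact hi.imp fun _ => Eq.symm
  obtain ⟨p, hp⟩ := Equiv.Perm.mem_sumCongrHom_range_of_perm_mapsTo_inl hmaps
  refine ⟨p, Equiv.ext fun i => ?_⟩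
  have hi := DFunLike.congr_fun hp (E.symm i)
  simp only [Equiv.Perm.sumCongrHom_apply, Equiv.sumCongr_apply, Equiv.trans_apply,
    Equiv.apply_symm_apply, Equiv.eq_symm_apply] at hi
  simpa [shuffle] using hi

theorem sum_filter_leftPositions_eq {A : Type*} [AddCommMonoid A] (G : Fin n ⊕ Fin m ≃ Fin M)
    {S : Finset (Fin M)} (hS : #S = n) (hSc : #Sᶜ = m) (f : Equiv.Perm (Fin M) → A) :
    ∑ π with leftPositions G π = S, f π = ∑ p, f (shuffle G (finSumEquivOfFinset hS hSc) p) := by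
  refine (sum_nbij (shuffle G (finSumEquivOfFinset hS hSc)) (fun p _ => ?_)
    (shuffle_injective G _).injOn (fun π hπ => ?_) fun _ _ => rfl).symm
  · simpa using leftPositions_shuffle G hS hSc p
  · simpa using exists_shuffle_eq G hS hSc (by simpa using hπ)

theorem xfun_eq_orderEmbOfFin (S : Finset (Fin M)) (hS : #S = n) (k : Fin n) :
    xfun S k = S.orderEmbOfFin hS k + 1 := by
  simp [xfun, orderEmbOfFin_apply, hS]

theorem card_compl_eq (G : Fin n ⊕ Fin m ≃ Fin M) {S : Finset (Fin M)} (hS : #S = n) :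
    #Sᶜ = m := by
  have hM := Fintype.card_congr G
  simp only [Fintype.card_sum, Fintype.card_fin] at hM
  rw [card_compl, Fintype.card_fin, hS, ← hM, Nat.add_sub_cancel_left]

theorem betheSum_eq_sum_mul_betheSum (Δ B : K) (β : Bool → K) (G : Fin n ⊕ Fin m ≃ Fin M)
    (u : Fin M → K) :
    betheSum Δ B β (fun i => (G.symm i).isLeft) u Fin.val =
      ∑ S ∈ powersetCard n (univ : Finset (Fin M)),
        betheSum Δ B β (fun _ => true) (fun i => u (G (.inl i))) (fun i => xfun S i - 1) *
        betheSum Δ B β (fun _ => false) (fun j => u (G (.inr j))) (fun j => xfun Sᶜ j - 1) := by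
  rw [betheSum, ← sum_fiberwise_of_maps_to
    fun π _ => mem_powersetCard_univ.2 (card_leftPositions G π)]
  refine sum_congr rfl fun S hS => ?_
  rw [mem_powersetCard_univ] at hS
  have hSc := card_compl_eq G hS
  rw [sum_filter_leftPositions_eq G hS hSc, Fintype.sum_prod_type, betheSum, betheSum, sum_mul_sum]
  refine sum_congr rfl fun σ _ => sum_congr rfl fun ρ _ => ?_
  rw [← ((Equiv.sumArrowEquivProdArrow _ _ _).symm.trans
    (G.arrowCongr (Equiv.refl Bool))).sum_comp, Fintype.sum_prod_type, sum_mul_sum]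
  refine sum_congr rfl fun τ _ => sum_congr rfl fun τ' _ => ?_
  rw [amplitude_eq_mul_amplitude Δ (finSumEquivOfFinset hS hSc) (S.orderEmbOfFin hS).strictMono
    (Sᶜ.orderEmbOfFin hSc).strictMono fun i j => by simp only [shuffle_apply]; simp,
    ← G.prod_comp, Fintype.prod_sum_type]
  simp only [shuffle_apply, xfun_eq_orderEmbOfFin _ hS, xfun_eq_orderEmbOfFin _ hSc]
  simp only [Equiv.trans_apply, Equiv.arrowCongr_apply, Equiv.coe_refl, Function.comp_apply,
    Equiv.symm_apply_apply, Equiv.sumArrowEquivProdArrow_symm_apply_inl, id_eq, Sum.isLeft_inl,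
    Equiv.sumArrowEquivProdArrow_symm_apply_inr, Sum.isLeft_inr, Sum.map_inl,
    finSumEquivOfFinset_inl, Sum.map_inr, finSumEquivOfFinset_inr, add_tsub_cancel_right]
  ring

end Shuffles

section Parametrization

variable {K : Type*} [Field K]

/-- The vertex weight of a spectral parameter `y`, with crossing parameter `a`. -/
def weight (a y : K) : K := a * y⁻¹ - a⁻¹ * y

/-- The product of the two vertex weights related by the reflection `y ↦ y⁻¹`. -/
def weightNorm (a y : K) : K := weight a y * weight a y⁻¹

/-- The multiplicative momentum of a magnon with spectral parameter `y`. -/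
def momentum (a y : K) : K := weight a y / weight a y⁻¹

/-- The anisotropy parameter of the chain with crossing parameter `a`. -/
def anisotropy (a : K) : K := a ^ 2 + a⁻¹ ^ 2

/-- The factor that the spectral parameter `y` contributes to the ratio between `F` or `F̄`, on a
chain of `M` sites, and the Bethe wave function. -/
def normalization (a : K) (M : ℕ) (y : K) : K :=
  (-(a ^ 2 * y ^ 2) + a⁻¹ ^ 2 * y⁻¹ ^ 2) * (y ^ 2 - y⁻¹ ^ 2)⁻¹ * weightNorm a y ^ M

theorem weightNorm_eq {a y : K} (ha : a ≠ 0) (hy : y ≠ 0) :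
    weightNorm a y = anisotropy a - y⁻¹ ^ 2 - y ^ 2 := by
  simp only [weightNorm, weight, anisotropy]
  field_simp
  ring

theorem weightNorm_zpow_boolSign (a y : K) (e : Bool) :
    weightNorm a (y ^ boolSign e) = weightNorm a y := by
  cases e <;> simp [weightNorm, mul_comm (weight a y⁻¹)]

theorem momentum_zpow_boolSign (a y : K) (e : Bool) :
    momentum a (y ^ boolSign e) = momentum a y ^ boolSign e := by
  cases e <;> simp [momentum]

theorem weight_sq_add_weight_inv_sq {a y : K} (ha : a ≠ 0) (hy : y ≠ 0) :
    weight a y ^ 2 + weight a y⁻¹ ^ 2 + anisotropy a * weightNorm a y =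
      (a ^ 2 - a⁻¹ ^ 2) ^ 2 := by
  simp only [weightNorm, weight, anisotropy]
  field_simp
  ring

theorem momentum_ne_zero {a y : K} (hk : weightNorm a y ≠ 0) : momentum a y ≠ 0 :=
  div_ne_zero (left_ne_zero_of_mul hk) (right_ne_zero_of_mul hk)

theorem energy_momentum {a y : K} (ha : a ≠ 0) (hy : y ≠ 0) (hk : weightNorm a y ≠ 0) :
    energy (anisotropy a) (momentum a y) = (a ^ 2 - a⁻¹ ^ 2) ^ 2 * (weightNorm a y)⁻¹ := by
  have hp := left_ne_zero_of_mul hk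
  have hq := right_ne_zero_of_mul hk
  rw [← weight_sq_add_weight_inv_sq ha hy, energy, momentum, weightNorm]
  generalize weight a y⁻¹ = q at hq
  field_simp

theorem scattering_momentum {a x y : K} (ha : a ≠ 0) (hc : a ^ 2 - a⁻¹ ^ 2 ≠ 0) (hx : x ≠ 0)
    (hy : y ≠ 0) (hkx : weightNorm a x ≠ 0) (hky : weightNorm a y ≠ 0) :
    scattering (anisotropy a) (momentum a x) (momentum a y) =
      (weightNorm a x + weightNorm a y + anisotropy a * weight a y⁻¹ ^ 2) /
        (weightNorm a x - weightNorm a y) := by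
  have hp := left_ne_zero_of_mul hky
  have hq := right_ne_zero_of_mul hky
  have hne : (a ^ 2 - a⁻¹ ^ 2) ^ 2 / (weight a y⁻¹ ^ 2 * weightNorm a x) ≠ 0 :=
    div_ne_zero (pow_ne_zero 2 hc) (mul_ne_zero (pow_ne_zero 2 hq) hkx)
  rw [scattering, ← energy_mul_self _ (momentum_ne_zero hky), energy_momentum ha hx hkx,
    energy_momentum ha hy hky, ← mul_div_mul_left _ (weightNorm a x - weightNorm a y) hne]
  simp only [momentum, weightNorm.eq_1 a y]
  generalize weight a y⁻¹ = q at hq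
  generalize a ^ 2 - a⁻¹ ^ 2 = c
  congr 1
  · field_simp
    ring
  · field_simp

end Parametrization

theorem pairFactor_eq_scattering {a x y : ℂ} {s t : ℤ} (ha : a ≠ 0) (hc : a ^ 2 - a⁻¹ ^ 2 ≠ 0)
    (hx : x ≠ 0) (hy : y ≠ 0) (hkx : weightNorm a (x ^ s) ≠ 0) (hky : weightNorm a (y ^ t) ≠ 0) :
    pairFactor a x y s t =
      scattering (anisotropy a) (momentum a (x ^ s)) (momentum a (y ^ t)) := by
  have hx' := zpow_ne_zero s hx
  have hy' := zpow_ne_zero t hy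
  rw [scattering_momentum ha hc hx' hy' hkx hky, pairFactor, weightNorm_eq ha hx',
    weightNorm_eq ha hy']
  simp only [zpow_neg, zpow_ofNat, anisotropy, weight]
  congr 1 <;> field_simp <;> ring

section WaveFunctions

variable {M N : ℕ}

/-- The common form of `F` and `F̄` at `w = 1`, in which only the boundary factor `f` differs. -/
noncomputable def homogeneousSum (a : ℂ) (f : ℂ → ℂ) (M : ℕ) (z : Fin N → ℂ) (x : ℕ → ℕ) : ℂ :=
  (a ^ 2 - a⁻¹ ^ 2) ^ N * (∏ j, (-(a ^ 2 * z j ^ 2) + a⁻¹ ^ 2 * (z j)⁻¹ ^ 2)) *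
  ∑ σ : Equiv.Perm (Fin N), ∑ τ : Fin N → Bool,
    (∏ j, (z j ^ (2 * boolSign (τ j)) - z j ^ (-(2 * boolSign (τ j))))⁻¹) *
    (∏ p : Fin N × Fin N with p.1 < p.2,
      pairFactor a (z (σ p.1)) (z (σ p.2)) (boolSign (τ (σ p.1))) (boolSign (τ (σ p.2)))) *
    (∏ k, f (z (σ k) ^ boolSign (τ (σ k)))) *
    (∏ k, ∏ _j : Fin M, weight a (z (σ k) ^ boolSign (τ (σ k)))) *
    (∏ k : Fin N, ∏ j : Fin M with j.val + 1 < x k, weight a (z (σ k) ^ boolSign (τ (σ k)))) *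
    (∏ k : Fin N, ∏ j : Fin M with x k ≤ j.val, weight a (z (σ k) ^ boolSign (τ (σ k)))⁻¹)

theorem FF_one (a b : ℂ) (z : Fin N → ℂ) (x : ℕ → ℕ) :
    FF a b M N z (fun _ => 1) x =
      homogeneousSum a (fun y => b * a⁻¹ * y⁻¹ - b⁻¹ * a * y) M z x := by
  simp [FF, homogeneousSum, weight, zpow_neg, zpow_ofNat, eps, boolSign]

theorem FBar_one (a b : ℂ) (z : Fin N → ℂ) (x : ℕ → ℕ) :
    FBar a b M N z (fun _ => 1) x =
      homogeneousSum a (fun y => b * a * y - b⁻¹ * a⁻¹ * y⁻¹) M z x := by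
  simp [FBar, homogeneousSum, weight, zpow_neg, zpow_ofNat, eps, boolSign]

theorem homogeneousSum_eq_zero {a : ℂ} (hc : a ^ 2 - a⁻¹ ^ 2 = 0) (f : ℂ → ℂ) (hN : N ≠ 0)
    (z : Fin N → ℂ) (x : ℕ → ℕ) : homogeneousSum a f M z x = 0 := by
  rw [homogeneousSum, hc, zero_pow hN, zero_mul, zero_mul]

theorem inv_zpow_boolSign_sub (y : ℂ) (e : Bool) :
    (y ^ (2 * boolSign e) - y ^ (-(2 * boolSign e)))⁻¹ =
      (boolSign e : ℂ) * (y ^ 2 - y⁻¹ ^ 2)⁻¹ := by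
  cases e
  · simp [zpow_neg, zpow_ofNat, ← inv_neg]
  · simp [zpow_neg, zpow_ofNat]

theorem prod_weight_positions (p : ℂ) {q : ℂ} (hq : q ≠ 0) {x : ℕ} (hx : x < M) :
    (∏ _j : Fin M, p) * (∏ j : Fin M with j.val + 1 < x + 1, p) *
      (∏ j : Fin M with x + 1 ≤ j.val, q) * q = (p * q) ^ M * (p / q) ^ x := by
  have hlt : #{j : Fin M | j.val + 1 < x + 1} = x := by
    simp only [Nat.add_lt_add_iff_right, Fin.card_filter_val_lt, min_eq_right hx.le]
  have hle : #{j : Fin M | x + 1 ≤ j.val} + 1 = M - x := by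
    have htotal := card_filter_add_card_filter_not (s := univ) fun j : Fin M => j.val < x + 1
    simp only [not_lt, Fin.card_filter_val_lt, card_univ, Fintype.card_fin,
      min_eq_right (Nat.succ_le_of_lt hx)] at htotal
    omega
  simp only [prod_const, hlt, card_univ, Fintype.card_fin]
  rw [mul_assoc _ (q ^ _), ← pow_succ, hle, mul_pow, ← pow_sub_mul_pow q hx.le, div_pow]
  field_simp

theorem site_factor_eq_normalization_mul {a B β : ℂ} {f : ℂ → ℂ}
    (hf : ∀ y, (a ^ 2 - a⁻¹ ^ 2) * f y = B * weight a y + β * weight a y⁻¹) {y : ℂ}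
    (hk : weightNorm a y ≠ 0) (e : Bool) {x : ℕ} (hx : x < M) :
    (a ^ 2 - a⁻¹ ^ 2) * (-(a ^ 2 * y ^ 2) + a⁻¹ ^ 2 * y⁻¹ ^ 2) *
      (y ^ (2 * boolSign e) - y ^ (-(2 * boolSign e)))⁻¹ * f (y ^ boolSign e) *
      (∏ _j : Fin M, weight a (y ^ boolSign e)) *
      (∏ j : Fin M with j.val + 1 < x + 1, weight a (y ^ boolSign e)) *
      (∏ j : Fin M with x + 1 ≤ j.val, weight a (y ^ boolSign e)⁻¹) =
    normalization a M y * (boolSign e * (B * momentum a y ^ boolSign e + β)) *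
      (momentum a y ^ boolSign e) ^ x := by
  have hq : weight a (y ^ boolSign e)⁻¹ ≠ 0 := by
    rw [← weightNorm_zpow_boolSign a y e] at hk
    exact right_ne_zero_of_mul hk
  have hboundary : (a ^ 2 - a⁻¹ ^ 2) * f (y ^ boolSign e) =
      weight a (y ^ boolSign e)⁻¹ * (B * momentum a (y ^ boolSign e) + β) := by
    rw [hf, momentum, mul_add, mul_left_comm, mul_div_cancel₀ _ hq, mul_comm β]
  have hpositions := prod_weight_positions (weight a (y ^ boolSign e)) hq hx
  rw [← weightNorm, ← momentum, weightNorm_zpow_boolSign] at hpositions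
  rw [normalization, inv_zpow_boolSign_sub, ← momentum_zpow_boolSign]
  linear_combination
    (-(a ^ 2 * y ^ 2) + a⁻¹ ^ 2 * y⁻¹ ^ 2) * (boolSign e * (y ^ 2 - y⁻¹ ^ 2)⁻¹) *
      ((∏ _j : Fin M, weight a (y ^ boolSign e)) *
        (∏ j : Fin M with j.val + 1 < x + 1, weight a (y ^ boolSign e)) *
        (∏ j : Fin M with x + 1 ≤ j.val, weight a (y ^ boolSign e)⁻¹) * hboundary +
      (B * momentum a (y ^ boolSign e) + β) * hpositions)

theorem homogeneousSum_eq_prod_mul_betheSum {a B : ℂ} {β : Bool → ℂ} {f : ℂ → ℂ} {h : Bool}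
    (ha : a ≠ 0) (hc : a ^ 2 - a⁻¹ ^ 2 ≠ 0)
    (hf : ∀ y, (a ^ 2 - a⁻¹ ^ 2) * f y = B * weight a y + β h * weight a y⁻¹)
    {z : Fin N → ℂ} (hz : ∀ i, z i ≠ 0) (hk : ∀ i, weightNorm a (z i) ≠ 0)
    {x : ℕ → ℕ} {v : Fin N → ℕ} (hv : ∀ i, v i < M) (hx : ∀ i : Fin N, x i = v i + 1) :
    homogeneousSum a f M z x = (∏ i, normalization a M (z i)) *
      betheSum (anisotropy a) B β (fun _ => h) (fun i => momentum a (z i)) v := by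
  have hk' (i : Fin N) (e : Bool) : weightNorm a (z i ^ boolSign e) ≠ 0 := by
    rw [weightNorm_zpow_boolSign]
    exact hk i
  rw [homogeneousSum, betheSum, mul_sum, mul_sum]
  refine sum_congr rfl fun σ _ => ?_
  rw [mul_sum, mul_sum]
  refine sum_congr rfl fun τ _ => ?_
  have hsites := prod_congr rfl fun k (_ : k ∈ univ) =>
    site_factor_eq_normalization_mul hf (hk (σ k)) (τ (σ k)) (hv k)
  simp only [prod_mul_distrib, ← hx, prod_const (a ^ 2 - a⁻¹ ^ 2), card_univ, Fintype.card_fin,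
    Equiv.prod_comp σ fun i => -(a ^ 2 * z i ^ 2) + a⁻¹ ^ 2 * (z i)⁻¹ ^ 2,
    Equiv.prod_comp σ fun i => (z i ^ (2 * boolSign (τ i)) - z i ^ (-(2 * boolSign (τ i))))⁻¹,
    Equiv.prod_comp σ fun i => normalization a M (z i),
    Equiv.prod_comp σ fun i => (boolSign (τ i) : ℂ),
    Equiv.prod_comp σ fun i => B * momentum a (z i) ^ boolSign (τ i) + β h] at hsites
  simp only [amplitude, pairAmplitude, if_true, ← momentum_zpow_boolSign,
    ← pairFactor_eq_scattering ha hc (hz _) (hz _) (hk' _ _) (hk' _ _)]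
  simp only [momentum_zpow_boolSign, prod_mul_distrib]
  linear_combination (∏ p : Fin N × Fin N with p.1 < p.2, pairFactor a (z (σ p.1)) (z (σ p.2))
    (boolSign (τ (σ p.1))) (boolSign (τ (σ p.2)))) * hsites

/-- The constant terms of the boundary factors of `F`, for the colour `true`, and of `F̄`. -/
noncomputable def boundaryConstant (a b : ℂ) (h : Bool) : ℂ :=
  if h then b * a⁻¹ ^ 2 - b⁻¹ * a ^ 2 else b * a ^ 2 - b⁻¹ * a⁻¹ ^ 2

theorem boundaryConstant_add (a b : ℂ) :
    boundaryConstant a b true + boundaryConstant a b false = anisotropy a * (b - b⁻¹) := by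
  simp only [boundaryConstant, anisotropy, if_true, Bool.false_eq_true, if_false]
  ring

theorem FF_one_eq_betheSum {a b : ℂ} (ha : a ≠ 0) (hc : a ^ 2 - a⁻¹ ^ 2 ≠ 0) {z : Fin N → ℂ}
    (hz : ∀ i, z i ≠ 0) (hk : ∀ i, weightNorm a (z i) ≠ 0) {S : Finset (Fin M)} (hS : #S = N) :
    FF a b M N z (fun _ => 1) (xfun S) = (∏ i, normalization a M (z i)) *
      betheSum (anisotropy a) (b - b⁻¹) (boundaryConstant a b) (fun _ => true)
        (fun i => momentum a (z i)) (fun i => xfun S i - 1) := by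
  rw [FF_one]
  refine homogeneousSum_eq_prod_mul_betheSum ha hc (fun y => ?_) hz hk (fun i => ?_) fun i => ?_
  · simp only [weight, boundaryConstant, if_true, inv_inv]
    field_simp
    ring
  · simp [xfun_eq_orderEmbOfFin S hS]
  · simp [xfun_eq_orderEmbOfFin S hS]

theorem FBar_one_eq_betheSum {a b : ℂ} (ha : a ≠ 0) (hc : a ^ 2 - a⁻¹ ^ 2 ≠ 0) {z : Fin N → ℂ}
    (hz : ∀ i, z i ≠ 0) (hk : ∀ i, weightNorm a (z i) ≠ 0) {S : Finset (Fin M)} (hS : #S = N) :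
    FBar a b M N z (fun _ => 1) (xfun S) = (∏ i, normalization a M (z i)) *
      betheSum (anisotropy a) (b - b⁻¹) (boundaryConstant a b) (fun _ => false)
        (fun i => momentum a (z i)) (fun i => xfun S i - 1) := by
  rw [FBar_one]
  refine homogeneousSum_eq_prod_mul_betheSum ha hc (fun y => ?_) hz hk (fun i => ?_) fun i => ?_
  · simp only [weight, boundaryConstant, Bool.false_eq_true, if_false, inv_inv]
    field_simp
    ring
  · simp [xfun_eq_orderEmbOfFin S hS]
  · simp [xfun_eq_orderEmbOfFin S hS]

theorem sum_FBar_mul_FF {m : ℕ} {a b : ℂ} (ha : a ≠ 0) (hc : a ^ 2 - a⁻¹ ^ 2 ≠ 0)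
    {z : Fin M → ℂ} (hz : ∀ i, z i ≠ 0) (hk : ∀ i, weightNorm a (z i) ≠ 0)
    (G : Fin N ⊕ Fin m ≃ Fin M) :
    ∑ S ∈ powersetCard N (univ : Finset (Fin M)),
        FBar a b M m (fun j => z (G (.inr j))) (fun _ => 1) (xfun Sᶜ) *
          FF a b M N (fun i => z (G (.inl i))) (fun _ => 1) (xfun S) =
      (∏ i, normalization a M (z i)) *
        betheSum (anisotropy a) (b - b⁻¹) (boundaryConstant a b) (fun i => (G.symm i).isLeft)
          (fun i => momentum a (z i)) Fin.val := by
  rw [betheSum_eq_sum_mul_betheSum, mul_sum]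
  refine sum_congr rfl fun S hS => ?_
  rw [mem_powersetCard_univ] at hS
  rw [FF_one_eq_betheSum ha hc (fun _ => hz _) (fun _ => hk _) hS,
    FBar_one_eq_betheSum ha hc (fun _ => hz _) (fun _ => hk _) (card_compl_eq G hS),
    ← G.prod_comp, Fintype.prod_sum_type]
  ring

theorem sum_FBar_mul_FF_eq_zero {m : ℕ} {a : ℂ} (hc : a ^ 2 - a⁻¹ ^ 2 = 0) (b : ℂ)
    (hNm : N ≠ 0 ∨ m ≠ 0) (z : Fin N → ℂ) (z' : Fin m → ℂ) :
    ∑ S ∈ powersetCard N (univ : Finset (Fin M)),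
      FBar a b M m z' (fun _ => 1) (xfun Sᶜ) * FF a b M N z (fun _ => 1) (xfun S) = 0 := by
  refine sum_eq_zero fun S _ => ?_
  rw [FBar_one, FF_one, mul_eq_zero]
  rcases hNm with hN | hm
  · exact .inr (homogeneousSum_eq_zero hc _ hN _ _)
  · exact .inl (homogeneousSum_eq_zero hc _ hm _ _)

end WaveFunctions

section Determinants

variable {K : Type*} [Field K] {M : ℕ}

/-- The entry in row `y` and column `j` of the determinant in the homogeneous limit of the
reflecting-end domain wall partition function. -/
def partitionEntry (a y : K) (j : ℕ) : K :=
  (a ^ 2 * y ^ 2) ^ j / (a ^ 2 - y ^ 2) ^ (2 * (j + 1)) -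
    (a ^ 2 * y ^ 2) ^ j / (1 - a ^ 2 * y ^ 2) ^ (2 * (j + 1))

theorem sq_sub_sq_mul_one_sub_eq {a y : K} (ha : a ≠ 0) (hy : y ≠ 0) :
    (a ^ 2 - y ^ 2) * (1 - a ^ 2 * y ^ 2) = -((a * y) ^ 2 * weightNorm a y) := by
  simp only [weightNorm, weight]
  field_simp
  ring

theorem partitionEntry_eq_zero {a : K} (ha : a ≠ 0) (hc : a ^ 2 - a⁻¹ ^ 2 = 0) (y : K) (j : ℕ) :
    partitionEntry a y j = 0 := by
  have ha4 : a ^ 4 = 1 := by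
    field_simp at hc
    linear_combination hc
  have hsq : (a ^ 2 - y ^ 2) ^ 2 = (1 - a ^ 2 * y ^ 2) ^ 2 := by
    linear_combination (1 - y ^ 4) * ha4
  rw [partitionEntry, pow_mul, pow_mul, hsq, sub_self]

theorem mode_momentum {a y : K} (ha : a ≠ 0) (hy : y ≠ 0) (hk : weightNorm a y ≠ 0) (j : ℕ) :
    mode (anisotropy a) j (momentum a y) =
      -((a * y) ^ 2 * weightNorm a y) * (((a ^ 2 - a⁻¹ ^ 2) ^ 2) ^ j * partitionEntry a y j) := by
  have hp := left_ne_zero_of_mul hk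
  have hq := right_ne_zero_of_mul hk
  have hp_eq : a ^ 2 - y ^ 2 = a * y * weight a y := by
    simp only [weight]
    field_simp
  have hq_eq : 1 - a ^ 2 * y ^ 2 = -(a * y * weight a y⁻¹) := by
    simp only [weight]
    field_simp
    ring
  rw [mode, energy_momentum ha hy hk, partitionEntry, hp_eq, hq_eq, (even_two_mul _).neg_pow,
    momentum, weightNorm]
  generalize weight a y⁻¹ = q at hq
  generalize (a ^ 2 - a⁻¹ ^ 2) ^ 2 = c
  simp only [pow_mul' _ 2, pow_right_comm _ 2 j, pow_succ _ j, mul_pow, inv_pow, div_pow]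
  have hpj := pow_ne_zero j hp
  have hqj := pow_ne_zero j hq
  generalize q ^ j = Q at *
  generalize weight a y ^ j = P at *
  field_simp
  ring

theorem weightNorm_sub_weightNorm {a x y : K} (ha : a ≠ 0) (hx : x ≠ 0) (hy : y ≠ 0) :
    weightNorm a x - weightNorm a y =
      (-(x⁻¹ * y) + x * y⁻¹) * (x⁻¹ * y⁻¹ - x * y) := by
  rw [weightNorm_eq ha hx, weightNorm_eq ha hy]
  field_simp
  ring

theorem det_mode_momentum {a : K} (ha : a ≠ 0) {z : Fin M → K} (hz : ∀ i, z i ≠ 0)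
    (hk : ∀ i, weightNorm a (z i) ≠ 0) :
    (Matrix.of fun i j : Fin M => mode (anisotropy a) j (momentum a (z i))).det =
      (∏ i, -((a * z i) ^ 2 * weightNorm a (z i))) *
        ((∏ j : Fin M, ((a ^ 2 - a⁻¹ ^ 2) ^ 2) ^ (j : ℕ)) *
          (Matrix.of fun i j : Fin M => partitionEntry a (z i) j).det) := by
  simp only [mode_momentum ha (hz _) (hk _)]
  rw [← Matrix.det_mul_row, ← Matrix.det_mul_column]
  rfl

theorem det_vandermonde_energy_momentum {a : K} (ha : a ≠ 0) {z : Fin M → K} (hz : ∀ i, z i ≠ 0)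
    (hk : ∀ i, weightNorm a (z i) ≠ 0) :
    (∏ i, weightNorm a (z i) ^ (M - 1)) *
        (Matrix.vandermonde fun i => energy (anisotropy a) (momentum a (z i))).det =
      (∏ j : Fin M, ((a ^ 2 - a⁻¹ ^ 2) ^ 2) ^ (j : ℕ)) *
        ∏ p : Fin M × Fin M with p.1 < p.2, (weightNorm a (z p.1) - weightNorm a (z p.2)) := by
  have hproj : ∏ p : Fin M × Fin M with p.1 < p.2, (weightNorm a (z p.1) - weightNorm a (z p.2)) =
      (Matrix.projVandermonde 1 fun i => weightNorm a (z i)).det := by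
    simp only [Matrix.det_projVandermonde, Pi.one_apply, one_mul, ← univ_product_univ,
      prod_filter, prod_product]
    simp only [← prod_filter, filter_lt_eq_Ioi]
  rw [hproj, ← Matrix.det_mul_column (fun i => weightNorm a (z i) ^ (M - 1)),
    ← Matrix.det_mul_row (fun j : Fin M => ((a ^ 2 - a⁻¹ ^ 2) ^ 2) ^ (j : ℕ))]
  congr 1
  ext i j
  have hrev : M - 1 = j.rev + j := by
    rw [Fin.val_rev]
    omega
  simp only [Matrix.of_apply, Matrix.vandermonde_apply, Matrix.projVandermonde_apply,
    energy_momentum ha (hz i) (hk i), Pi.one_apply, one_pow, one_mul, hrev, pow_add]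
  rw [mul_pow, inv_pow (weightNorm _ _), mul_assoc, mul_left_comm (weightNorm a (z i) ^ (j : ℕ)),
    mul_inv_cancel₀ (pow_ne_zero _ (hk i)), mul_one, mul_comm]

theorem betheSum_momentum_mul_prod_sub {a B : K} {β : Bool → K}
    (hβ : β true + β false = anisotropy a * B) (g : Fin M → Bool) (ha : a ≠ 0)
    (hc : a ^ 2 - a⁻¹ ^ 2 ≠ 0) {z : Fin M → K} (hz : ∀ i, z i ≠ 0)
    (hk : ∀ i, weightNorm a (z i) ≠ 0) (hinj : Function.Injective fun i => weightNorm a (z i)) :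
    betheSum (anisotropy a) B β g (fun i => momentum a (z i)) Fin.val *
        ∏ p : Fin M × Fin M with p.1 < p.2, (weightNorm a (z p.1) - weightNorm a (z p.2)) =
      B ^ M * (∏ i, -(weightNorm a (z i) ^ M * (a * z i) ^ 2)) *
        (Matrix.of fun i j : Fin M => partitionEntry a (z i) j).det := by
  have hcols : ∏ j : Fin M, ((a ^ 2 - a⁻¹ ^ 2) ^ 2) ^ (j : ℕ) ≠ 0 :=
    prod_ne_zero_iff.2 fun j _ => pow_ne_zero _ (pow_ne_zero _ hc)
  have hrows : ∏ i, -(weightNorm a (z i) ^ M * (a * z i) ^ 2) =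
      (∏ i, weightNorm a (z i) ^ (M - 1)) * ∏ i, -((a * z i) ^ 2 * weightNorm a (z i)) := by
    rw [← prod_mul_distrib]
    refine prod_congr rfl fun i _ => ?_
    rw [← pow_sub_one_mul i.pos.ne' (weightNorm a (z i))]
    ring
  have hinj' : Function.Injective fun i => energy (anisotropy a) (momentum a (z i)) := by
    simp only [energy_momentum ha (hz _) (hk _)]
    exact (mul_right_injective₀ (pow_ne_zero 2 hc)).comp (inv_injective.comp hinj)
  have henergy (i : Fin M) : energy (anisotropy a) (momentum a (z i)) ≠ 0 := by
    rw [energy_momentum ha (hz i) (hk i)]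
    exact mul_ne_zero (pow_ne_zero 2 hc) (inv_ne_zero (hk i))
  have hbethe := betheSum_mul_det_vandermonde hβ g (fun i => momentum_ne_zero (hk i))
    henergy hinj'
  rw [det_mode_momentum ha hz hk] at hbethe
  refine mul_left_cancel₀ hcols ?_
  rw [hrows, mul_left_comm, ← det_vandermonde_energy_momentum ha hz hk]
  linear_combination (∏ i, weightNorm a (z i) ^ (M - 1)) * hbethe

theorem normalization_mul_neg_weightNorm_pow (a : K) {y : K} (hy : y ≠ 0) (n : ℕ) :
    normalization a n y * -(weightNorm a y ^ n * (a * y) ^ 2) =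
      a ^ 2 * ((a ^ 2 * y ^ 2 - a⁻¹ ^ 2 * y⁻¹ ^ 2) / (1 - y⁻¹ ^ 4)) * weightNorm a y ^ (2 * n) := by
  have hfactor : 1 - y⁻¹ ^ 4 = (y ^ 2 - y⁻¹ ^ 2) * y⁻¹ ^ 2 := by
    field_simp
  rw [normalization, hfactor, div_eq_mul_inv, mul_inv, inv_pow y, inv_inv]
  ring

theorem prod_normalization_mul_betheSum {a B : K} {β : Bool → K}
    (hβ : β true + β false = anisotropy a * B) (g : Fin M → Bool) (ha : a ≠ 0)
    (hc : a ^ 2 - a⁻¹ ^ 2 ≠ 0) {z : Fin M → K} (hz : ∀ i, z i ≠ 0)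
    (hk : ∀ i, weightNorm a (z i) ≠ 0) (hinj : Function.Injective fun i => weightNorm a (z i)) :
    (∏ i, normalization a M (z i)) *
        betheSum (anisotropy a) B β g (fun i => momentum a (z i)) Fin.val =
      a ^ (2 * M) * B ^ M *
        (∏ i, (a ^ 2 * z i ^ 2 - a⁻¹ ^ 2 * (z i)⁻¹ ^ 2) / (1 - (z i)⁻¹ ^ 4)) *
        ((∏ i, weightNorm a (z i) ^ (2 * M)) /
          ∏ p : Fin M × Fin M with p.1 < p.2, (weightNorm a (z p.1) - weightNorm a (z p.2))) *
        (Matrix.of fun i j : Fin M => partitionEntry a (z i) j).det := by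
  have hD : ∏ p : Fin M × Fin M with p.1 < p.2,
      (weightNorm a (z p.1) - weightNorm a (z p.2)) ≠ 0 :=
    prod_ne_zero_iff.2 fun p hp => sub_ne_zero.2 (hinj.ne (mem_filter.1 hp).2.ne)
  have hsites := prod_congr rfl fun i (_ : i ∈ univ) =>
    normalization_mul_neg_weightNorm_pow a (hz i) M
  simp only [prod_mul_distrib, prod_const (a ^ 2), card_univ, Fintype.card_fin, ← pow_mul]
    at hsites
  rw [eq_div_of_mul_eq hD (betheSum_momentum_mul_prod_sub hβ g ha hc hz hk hinj)]
  linear_combination (B ^ M * (Matrix.of fun i j : Fin M => partitionEntry a (z i) j).det /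
    ∏ p : Fin M × Fin M with p.1 < p.2, (weightNorm a (z p.1) - weightNorm a (z p.2))) * hsites

theorem weightNorm_ne_zero {a y : K} (ha : a ≠ 0) (hy : y ≠ 0)
    (h : (a ^ 2 - y ^ 2) * (1 - a ^ 2 * y ^ 2) ≠ 0) : weightNorm a y ≠ 0 := by
  rw [sq_sub_sq_mul_one_sub_eq ha hy] at h
  exact right_ne_zero_of_mul (neg_ne_zero.1 h)

theorem weightNorm_ne_weightNorm {a x y : K} (ha : a ≠ 0) (hx : x ≠ 0) (hy : y ≠ 0)
    (hmul : x ^ 2 * y ^ 2 ≠ 1) (hne : x ^ 2 ≠ y ^ 2) : weightNorm a x ≠ weightNorm a y := by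
  intro heq
  have hprod : (x ^ 2 - y ^ 2) * (1 - x ^ 2 * y ^ 2) =
      x ^ 2 * y ^ 2 * (weightNorm a x - weightNorm a y) := by
    rw [weightNorm_sub_weightNorm ha hx hy]
    field_simp
    ring
  rw [heq, sub_self, mul_zero] at hprod
  exact mul_ne_zero (sub_ne_zero.2 hne) (sub_ne_zero.2 hmul.symm) hprod

end Determinants

end OpenChain

open OpenChain

/-- Theorem 6.4: the homogeneous (`w_1 = ⋯ = w_M = 1`) Cauchy-type identity for the
symmetric functions `F` and `F̄`, with the homogeneous-limit determinant of the
reflecting-end domain wall boundary partition function on the right-hand side. -/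
theorem cauchy_identity_homogeneous (a b : ℂ) (M N : ℕ) (hM : 1 ≤ M) (hNM : N ≤ M)
    (z : Fin M → ℂ)
    (ha : a ≠ 0) (hb : b ≠ 0) (hz : ∀ j, z j ≠ 0)
    (hz4 : ∀ j, z j ^ 4 ≠ 1)
    (hzz : ∀ j k, j ≠ k → z j ^ 2 * z k ^ 2 ≠ 1)
    (hzz' : ∀ j k, j ≠ k → z j ^ 2 ≠ z k ^ 2)
    (haz : ∀ i, (a ^ 2 - z i ^ 2) * (1 - a ^ 2 * z i ^ 2) ≠ 0) :
    ∑ S ∈ Finset.powersetCard N (Finset.univ : Finset (Fin M)),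
      FBar a b M (M - N) (fun k => z (Fin.castLE (Nat.sub_le M N) k))
        (fun _ => (1 : ℂ)) (xfun Sᶜ) *
      FF a b M N (fun k : Fin N => z ⟨M - N + (k : ℕ), by have := k.isLt; omega⟩)
        (fun _ => (1 : ℂ)) (xfun S)
    = a ^ (2 * M) * (b - b⁻¹) ^ M *
      (∏ i, (a ^ (2:ℤ) * z i ^ (2:ℤ) - a ^ (-2:ℤ) * z i ^ (-2:ℤ)) / (1 - z i ^ (-4:ℤ))) *
      ((∏ i, (a ^ (2:ℤ) + a ^ (-2:ℤ) - z i ^ (-2:ℤ) - z i ^ (2:ℤ)) ^ (2 * M)) /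
       (∏ p ∈ Finset.univ.filter (fun p : Fin M × Fin M => p.1 < p.2),
        (-((z p.1)⁻¹ * z p.2) + z p.1 * (z p.2)⁻¹) *
        ((z p.1)⁻¹ * (z p.2)⁻¹ - z p.1 * z p.2))) *
      Matrix.det (Matrix.of fun i j : Fin M =>
        (a ^ 2 * z i ^ 2) ^ (j : ℕ) / (a ^ 2 - z i ^ 2) ^ (2 * ((j : ℕ) + 1))
          - (a ^ 2 * z i ^ 2) ^ (j : ℕ) / (1 - a ^ 2 * z i ^ 2) ^ (2 * ((j : ℕ) + 1))) := by
  by_cases hc : a ^ 2 - a⁻¹ ^ 2 = 0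
  · rw [sum_FBar_mul_FF_eq_zero hc b (by omega)]
    have hrow : ∀ j, (Matrix.of fun i j : Fin M => partitionEntry a (z i) j) ⟨0, hM⟩ j = 0 :=
      fun j => partitionEntry_eq_zero ha hc _ j
    exact (mul_eq_zero_of_right _ (Matrix.det_eq_zero_of_row_eq_zero _ hrow)).symm
  have hk (i : Fin M) : weightNorm a (z i) ≠ 0 := weightNorm_ne_zero ha (hz i) (haz i)
  have hinj : Function.Injective fun i => weightNorm a (z i) := fun i j =>
    not_imp_not.1 fun hij => weightNorm_ne_weightNorm ha (hz i) (hz j) (hzz i j hij) (hzz' i j hij)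
  let G : Fin N ⊕ Fin (M - N) ≃ Fin M :=
    (Equiv.sumComm _ _).trans (finSumFinEquiv.trans (finCongr (Nat.sub_add_cancel hNM)))
  refine (sum_FBar_mul_FF ha hc hz hk G).trans ?_
  rw [prod_normalization_mul_betheSum (boundaryConstant_add a b) _ ha hc hz hk hinj]
  simp only [weightNorm_sub_weightNorm ha (hz _) (hz _)]
  simp only [weightNorm_eq ha (hz _), anisotropy, partitionEntry, zpow_neg, zpow_ofNat, inv_pow]
end
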